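/- arXiv:2501.10102 — 10 statements merged into one kernel-verified Lean document; each statement's English description precedes it below -/
import Mathlib

section
/- Let n ≥ 0 and let Gen(n) be the list of arrangements produced by the permutation-iteration algorithm (defined in the context). Then Gen(n) has length n! and its entries are pairwise distinct; consequently every bijection of Fin n occurs exactly once in Gen(n). -/
/-- `cyc i j` is the permutation of positions with `i ↦ j`, `p ↦ p - 1` for `i < p ≤ j`,
and every other position fixed (the cycle `(j, j-1, …, i)`); it describes extracting
the entry at position `j` and inserting it at position `i`. -/
def cyc {n : ℕ} (i j : Fin n) : Equiv.Perm (Fin n) :=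
  (((List.finRange n).filter (fun p => decide (i ≤ p ∧ p ≤ j))).reverse).formPerm

/-- `left_i`: exchange the entries at positions `i` and `i+1`. -/
def leftMove (n i : ℕ) (a : Equiv.Perm (Fin n)) : Equiv.Perm (Fin n) :=
  if h : i + 1 < n then (Equiv.swap ⟨i, by omega⟩ ⟨i + 1, h⟩).trans a else a

/-- `right_i`: move the entry at position `n-1` to position `i`, shifting the entries
at positions `i, …, n-2` one position to the right. -/
def rightMove (n i : ℕ) (a : Equiv.Perm (Fin n)) : Equiv.Perm (Fin n) :=
  if h : i + 1 < n then (cyc (⟨i, by omega⟩ : Fin n) ⟨n - 1, by omega⟩).trans a else a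

/-- The pattern of moves performed between the recursive calls on a sublist of `m = n - i`
elements: one `left`, then `m - 3` times `right` (if `m` is even) or `left` (if `m` is odd),
and finally (when `m > 2`) one more `left`.  `true` codes `left`, `false` codes `right`. -/
def movesList (m : ℕ) : List Bool :=
  true :: (List.replicate (m - 3) (if Even m then false else true) ++
    if 2 < m then [true] else [])

/-- The recursive generation procedure `gen(a, i)` (with an extra fuel argument making the
recursion structural; `fuel = n - i` always suffices, and `Gen` below uses fuel `n`).
If `i ≥ n - 1` it emits `[a]`; otherwise it first emits `gen(a, i+1)` (the "no-op" call)
and then, for each move prescribed by `movesList (n - i)`, applies that move at position `i`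
to the last arrangement emitted so far and emits the generated list of the result. -/
def gen (n : ℕ) : ℕ → Equiv.Perm (Fin n) → ℕ → List (Equiv.Perm (Fin n))
  | 0, a, _ => [a]
  | fuel + 1, a, i =>
      if i + 1 < n then
        (movesList (n - i)).foldl
          (fun acc b =>
            acc ++ gen n fuel
              ((if b then leftMove n i else rightMove n i) (acc.getLastD 1)) (i + 1))
          (gen n fuel a (i + 1))
      else [a]

/-- `Gen n = gen(id, 0)`: the full list of arrangements produced by the algorithm. -/
def Gen (n : ℕ) : List (Equiv.Perm (Fin n)) := gen n n 1 0


def Mv (n i : ℕ) (b : Bool) : Equiv.Perm (Fin n) :=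
  (if b then leftMove n i else rightMove n i) 1

theorem mv_apply (n i : ℕ) (b : Bool) (a : Equiv.Perm (Fin n)) :
    (if b then leftMove n i else rightMove n i) a = a * Mv n i b := by
  unfold Mv leftMove rightMove
  cases b <;> by_cases h : i + 1 < n <;> simp [h] <;> rfl

theorem cyc_list (n i : ℕ) (h : i + 1 < n) :
    (((List.finRange n).filter (fun p => decide ((⟨i, by omega⟩ : Fin n) ≤ p ∧ p ≤ ⟨n - 1, by omega⟩))).map
      (fun p : Fin n => (p : ℕ))) = List.range' i (n - i) := by
  have h1 : (List.finRange n).filter (fun p => decide ((⟨i, by omega⟩ : Fin n) ≤ p ∧ p ≤ ⟨n - 1, by omega⟩))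
      = (List.finRange n).filter ((fun p : ℕ => decide (i ≤ p)) ∘ (fun p : Fin n => (p : ℕ))) := by
    apply List.filter_congr
    intro x _
    simp [Fin.le_def]
    intro; omega
  rw [h1, ← List.filter_map]
  have h2 : (List.finRange n).map (fun p : Fin n => (p : ℕ)) = List.range n := by
    simp
  rw [h2]
  have h3 : List.range n = List.range' 0 i ++ List.range' i (n - i) := by
    rw [List.range_eq_range']
    have := List.range'_append (s := 0) (m := i) (n := n - i) (step := 1)
    simp only [one_mul, zero_add] at this
    rw [this]; congr 1; omega
  rw [h3, List.filter_append, List.filter_eq_nil_iff.2, List.filter_eq_self.2]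
  · simp
  · intro a; simp only [List.mem_range'_1, decide_eq_true_eq]; omega
  · intro a; simp only [List.mem_range'_1, decide_eq_true_eq]; omega

theorem Mv_false (n i : ℕ) (h : i + 1 < n) (x : Fin n) :
    (Mv n i false x : ℕ) = if (x : ℕ) < i then (x : ℕ) else if (x : ℕ) = i then n - 1 else x - 1 := by
  have e : Mv n i false = cyc (⟨i, by omega⟩ : Fin n) ⟨n - 1, by omega⟩ := by
    simp [Mv, rightMove, h]; rfl
  rw [e, cyc]
  have hl := cyc_list n i h
  set L := (List.finRange n).filter (fun p => decide ((⟨i, by omega⟩ : Fin n) ≤ p ∧ p ≤ ⟨n - 1, by omega⟩)) with hL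
  have hnd : L.reverse.Nodup := List.nodup_reverse.2 ((List.nodup_finRange n).filter _)
  have hlen : L.reverse.length = n - i := by
    have := congrArg List.length hl
    simpa using this
  have hlen' : L.length = n - i := by simpa using hlen
  have hget : ∀ k (hk : k < L.reverse.length), ((L.reverse[k] : Fin n) : ℕ) = n - 1 - k := by
    intro k hk
    rw [List.getElem_reverse]
    have : (L.map (fun p : Fin n => (p : ℕ)))[L.length - 1 - k]'(by simp; omega) = n - 1 - k := by
      simp only [hl, List.getElem_range']; omega
    simpa using this
  split_ifs with h1 h2
  · rw [List.formPerm_apply_of_notMem]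
    simp [hL, Fin.le_def]; omega
  · have hx : x = L.reverse[n - i - 1]'(by omega) := by
      apply Fin.ext; rw [hget]; omega
    rw [hx, List.formPerm_apply_getElem _ hnd, hget]
    have : n - i - 1 + 1 = L.reverse.length := by omega
    rw [this, Nat.mod_self]; omega
  · have hx : x = L.reverse[n - 1 - x]'(by omega) := by
      apply Fin.ext; rw [hget]; omega
    conv_lhs => rw [hx]
    rw [List.formPerm_apply_getElem _ hnd, hget, Nat.mod_eq_of_lt (by omega)]
    omega

theorem Mv_true (n i : ℕ) (h : i + 1 < n) (x : Fin n) :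
    (Mv n i true x : ℕ) = if (x : ℕ) = i then i + 1 else if (x : ℕ) = i + 1 then i else x := by
  have e : Mv n i true = Equiv.swap (⟨i, by omega⟩ : Fin n) ⟨i + 1, h⟩ := by
    simp [Mv, leftMove, h]; rfl
  rw [e, Equiv.swap_apply_def]
  simp only [Fin.ext_iff]
  split_ifs <;> rfl

structure Spec (n i : ℕ) (q : Equiv.Perm (Fin n)) : Prop where
  len : ∀ f a, n ≤ f + i → (gen n f a i).length = (n - i).factorial
  nodup : ∀ f a, n ≤ f + i → (gen n f a i).Nodup
  last : ∀ f a, n ≤ f + i → (gen n f a i).getLastD 1 = a * q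
  fix : ∀ f a, n ≤ f + i → ∀ b ∈ gen n f a i, ∀ x : Fin n, (x : ℕ) < i → b x = a x

theorem spec_base (n i : ℕ) (h : n ≤ i + 1) : Spec n i 1 := by
  have key : ∀ f a, gen n f a i = [a] := by
    intro f a
    cases f with
    | zero => rfl
    | succ f => rw [gen, if_neg (by omega)]
  have : n - i = 0 ∨ n - i = 1 := by omega
  constructor <;> intro f a _ <;> rw [key]
  · rcases this with h | h <;> simp [h]
  · simp
  · simp
  · simp

def TT (n i : ℕ) (q : Equiv.Perm (Fin n)) (mv : ℕ → Bool) : ℕ → Equiv.Perm (Fin n)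
  | 0 => 1
  | r + 1 => TT n i q mv r * q * Mv n i (mv r)

theorem fold_eq (n i : ℕ) (q a : Equiv.Perm (Fin n)) (mv : ℕ → Bool)
    (E : Equiv.Perm (Fin n) → List (Equiv.Perm (Fin n)))
    (hE : ∀ s, E s ≠ [] ∧ (E s).getLastD 1 = s * q) (L : ℕ) :
    ((List.range L).map mv).foldl (fun acc b =>
        acc ++ E ((if b then leftMove n i else rightMove n i) (acc.getLastD 1))) (E a)
      = (List.range (L + 1)).flatMap (fun r => E (a * TT n i q mv r)) ∧
    ((List.range (L + 1)).flatMap (fun r => E (a * TT n i q mv r))).getLastD 1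
      = a * (TT n i q mv L * q) := by
  have hlast : ∀ L, ((List.range (L + 1)).flatMap (fun r => E (a * TT n i q mv r))).getLastD 1
      = a * (TT n i q mv L * q) := by
    intro L
    rw [List.range_succ, List.flatMap_append]
    simp only [List.flatMap_cons, List.flatMap_nil, List.append_nil]
    obtain ⟨h1, h2⟩ := hE (a * TT n i q mv L)
    rw [← mul_assoc, ← h2]
    simp [List.getLastD_eq_getLast?, List.getLast?_append, List.getLast?_eq_some_getLast h1]
  refine ⟨?_, hlast L⟩
  induction L with
  | zero => simp [TT]
  | succ L ih =>
    rw [List.range_succ, List.map_append, List.foldl_append, ih]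
    simp only [List.map_cons, List.map_nil, List.foldl_cons, List.foldl_nil]
    rw [hlast L, mv_apply, List.range_succ (n := L + 1), List.flatMap_append]
    simp [TT, mul_assoc]

theorem spec_step (n i : ℕ) (h : i + 1 < n) (q : Equiv.Perm (Fin n)) (hq : Spec n (i + 1) q)
    (mv : ℕ → Bool) (hmv : movesList (n - i) = (List.range (n - i - 1)).map mv)
    (hfix : ∀ r < n - i, ∀ x : Fin n, (x : ℕ) < i → TT n i q mv r x = x)
    (hinj : ∀ r s, r < s → s < n - i →
      TT n i q mv r ⟨i, by omega⟩ ≠ TT n i q mv s ⟨i, by omega⟩) :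
    Spec n i (TT n i q mv (n - i - 1) * q) := by
  have hm : n - i - 1 + 1 = n - i := by omega
  have key : ∀ f a, n ≤ f + i → ∃ f', n ≤ f' + (i + 1) ∧ gen n f a i =
      (List.range (n - i)).flatMap (fun r => gen n f' (a * TT n i q mv r) (i + 1)) ∧
      (gen n f a i).getLastD 1 = a * (TT n i q mv (n - i - 1) * q) := by
    intro f a hf
    obtain ⟨f, rfl⟩ : ∃ g, f = g + 1 := ⟨f - 1, by omega⟩
    have hE : ∀ s, gen n f s (i + 1) ≠ [] ∧ (gen n f s (i + 1)).getLastD 1 = s * q := by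
      intro s
      refine ⟨?_, hq.last f s (by omega)⟩
      intro h0
      have := hq.len f s (by omega)
      rw [h0] at this
      exact (Nat.factorial_pos _).ne this
    have := fold_eq n i q a mv (fun s => gen n f s (i + 1)) hE (n - i - 1)
    refine ⟨f, by omega, ?_⟩
    rw [gen, if_pos h, hmv, this.1, this.2, hm]
    exact ⟨rfl, rfl⟩
  constructor <;> intro f a hf <;> obtain ⟨f', hf', e, el⟩ := key f a hf
  · rw [e, List.length_flatMap]
    have : ∀ r, (gen n f' (a * TT n i q mv r) (i + 1)).length = (n - i - 1).factorial := by
      intro r; rw [hq.len f' _ hf']; rfl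
    simp only [this]
    rw [← hm, Nat.factorial_succ]; simp
  · rw [e, List.nodup_flatMap]
    refine ⟨fun r _ => hq.nodup f' _ hf', ?_⟩
    refine List.Pairwise.imp_of_mem ?_ (List.pairwise_lt_range (n := n - i))
    intro r s _ hs hrs b hb hb'
    have h1 := hq.fix f' _ hf' b hb ⟨i, by omega⟩ (by simp)
    have h2 := hq.fix f' _ hf' b hb' ⟨i, by omega⟩ (by simp)
    rw [h1] at h2
    exact hinj r s hrs (List.mem_range.1 hs) (a.injective h2)
  · exact el
  · intro b hb x hx
    rw [e, List.mem_flatMap] at hb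
    obtain ⟨r, hr, hb⟩ := hb
    rw [hq.fix f' _ hf' b hb x (by omega), Equiv.Perm.mul_apply, hfix r (List.mem_range.1 hr) x hx]

def qn (n i x : ℕ) : ℕ :=
  if n ≤ i + 1 ∨ x < i then x else
  if (n - i) % 2 = 1 ∨ n = i + 2 then
    if x = i then i + 1 else if x = i + 1 then i else x
  else
    if x = i then i + 1 else if x = i + 1 then (if n = i + 4 then i + 2 else i + 4)
    else if x = i + 2 then i + 3 else if x + 3 ≤ n then x + 2
    else if x + 2 = n then i + 2 else i

def UU (n i r x : ℕ) : ℕ :=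
  if x < i then x else if x = i then (if r = 0 then i + 2 else n - r)
  else if x = i + 1 then (if r = 0 then i else if r = 1 then i + 2 else n - r + 1)
  else if x = i + 2 then i + 1 else if x ≤ i + r then n - r + (x - i) - 1
  else if x = i + r + 1 then i + 2 else if x = i + r + 2 then i else x - r

def mvf (m r : ℕ) : Bool := decide (r = 0 ∨ r + 2 = m ∨ m % 2 = 1)

theorem movesList_eq (m : ℕ) (hm : 2 ≤ m) : movesList m = (List.range (m - 1)).map (mvf m) := by
  apply List.ext_getElem
  · simp only [movesList]; split_ifs <;> simp <;> omega
  · intro k h1 h2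
    simp only [List.length_map, List.length_range] at h2
    simp only [List.getElem_map, List.getElem_range, movesList, mvf]
    rcases k with _ | k
    · simp
    · simp only [List.getElem_cons_succ, List.getElem_append, List.length_replicate]
      split_ifs with h3 h4 h5
      · rw [Nat.even_iff] at h4
        simp; omega
      · rw [Nat.even_iff] at h4
        simp; omega
      · simp; omega
      · omega

set_option maxHeartbeats 4000000 in
theorem step_two (n i : ℕ) (h : n = i + 2) (q : Equiv.Perm (Fin n)) (hs : Spec n (i + 1) q)
    (hq : ∀ x : Fin n, (q x : ℕ) = qn n (i + 1) x) :
    ∃ q : Equiv.Perm (Fin n), Spec n i q ∧ ∀ x : Fin n, (q x : ℕ) = qn n i x := by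
  have hq1 : q = 1 := by
    ext x; rw [hq, qn, if_pos (by omega)]; rfl
  have T1 : ∀ x : Fin n, (TT n i q (mvf (n - i)) 1 x : ℕ) =
      if (x : ℕ) = i then i + 1 else if (x : ℕ) = i + 1 then i else x := by
    intro x
    have := Mv_true n i (by omega) x
    simp [TT, hq1, mvf, this]
  refine ⟨_, spec_step n i (by omega) q hs (mvf (n - i)) (movesList_eq _ (by omega)) ?_ ?_, ?_⟩
  · intro r hr x hx
    obtain rfl | rfl : r = 0 ∨ r = 1 := by omega
    · simp [TT]
    · apply Fin.ext; rw [T1]; split_ifs <;> first | omega | contradiction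
  · intro r s hrs hs
    obtain rfl : r = 0 := by omega
    obtain rfl : s = 1 := by omega
    rw [Ne, Fin.ext_iff, T1]
    simp [TT]
  · intro x
    have : n - i - 1 = 1 := by omega
    rw [this, hq1, mul_one, ← hq1, T1]
    simp only [qn]; split_ifs <;> first | omega | contradiction

set_option maxHeartbeats 4000000 in
theorem uu_step (n i r y z w : ℕ) (h : i + 4 ≤ n) (hr : r + 1 + 2 < n - i) (hy : y < n)
    (hz : z = if y < i then y else if y = i then n - 1 else y - 1)
    (hw : w = if z = i + 1 then i + 2 else if z = i + 2 then i + 1 else z) :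
    UU n i r w = UU n i (r + 1) y := by
  split_ifs at hz <;> split_ifs at hw <;>
    first
    | (exfalso; omega)
    | (simp only [UU]; (repeat' (first | (exfalso; omega) | split)) <;> omega)

set_option maxHeartbeats 4000000 in
theorem uu_last (n i k y z w : ℕ) (h : i + 4 ≤ n) (hk : n - i - 1 = k + 1 + 1) (hy : y < n)
    (hz : z = if y = i then i + 1 else if y = i + 1 then i else y)
    (hw : w = if z = i + 1 then i + 2 else if z = i + 2 then i + 1 else z) :
    UU n i k w = if y < i then y else if y = i then i + 1 else if y + 3 ≤ n then y + 2
      else if y + 2 = n then i + 2 else i := by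
  split_ifs at hz <;> split_ifs at hw <;>
    first
    | (exfalso; omega)
    | (simp only [UU]; (repeat' (first | (exfalso; omega) | split)) <;> omega)

set_option maxHeartbeats 4000000 in
theorem step_even (n i : ℕ) (h : i + 4 ≤ n) (he : (n - i) % 2 = 0) (q : Equiv.Perm (Fin n))
    (hs : Spec n (i + 1) q)
    (hq : ∀ x : Fin n, (q x : ℕ) = qn n (i + 1) x) :
    ∃ q : Equiv.Perm (Fin n), Spec n i q ∧ ∀ x : Fin n, (q x : ℕ) = qn n i x := by
  have hq' : ∀ x : Fin n, (q x : ℕ) =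
      if (x : ℕ) = i + 1 then i + 2 else if (x : ℕ) = i + 2 then i + 1 else x := by
    intro x; rw [hq]; simp only [qn]; split_ifs <;> first | omega | contradiction
  have T1 : ∀ r, r + 2 < n - i → ∀ x : Fin n, (TT n i q (mvf (n - i)) (r + 1) x : ℕ) = UU n i r x := by
    intro r
    induction r with
    | zero =>
      intro hr x
      have h1 := Mv_true n i (by omega) x
      have h2 := hq' (Mv n i true x)
      rw [h1] at h2
      have : mvf (n - i) 0 = true := by simp [mvf]
      simp only [TT, this, one_mul, Equiv.Perm.mul_apply]
      rw [h2]
      simp only [UU]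
      split_ifs <;> first | omega | contradiction
    | succ r ih =>
      intro hr x
      have h1 := Mv_false n i (by omega) x
      have h2 := hq' (Mv n i false x)
      rw [h1] at h2
      have h3 := ih (by omega) (q (Mv n i false x))
      rw [h2] at h3
      have : mvf (n - i) (r + 1) = false := by simp [mvf]; omega
      rw [TT, this, Equiv.Perm.mul_apply, Equiv.Perm.mul_apply, h3]
      exact uu_step n i r x _ _ h (by omega) x.2 rfl rfl
  have T2 : ∀ x : Fin n, (TT n i q (mvf (n - i)) (n - i - 1) x : ℕ) =
      if (x : ℕ) < i then (x : ℕ) else if (x : ℕ) = i then i + 1 else if (x : ℕ) + 3 ≤ n then x + 2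
      else if (x : ℕ) + 2 = n then i + 2 else i := by
    intro x
    obtain ⟨k, hk⟩ : ∃ k, n - i - 1 = k + 1 + 1 := ⟨n - i - 3, by omega⟩
    rw [hk]
    have h1 := Mv_true n i (by omega) x
    have h2 := hq' (Mv n i true x)
    rw [h1] at h2
    have h3 := T1 k (by omega) (q (Mv n i true x))
    rw [h2] at h3
    have : mvf (n - i) (k + 1) = true := by simp [mvf]; omega
    rw [TT, this, Equiv.Perm.mul_apply, Equiv.Perm.mul_apply, h3]
    exact uu_last n i k x _ _ h (by omega) x.2 rfl rfl
  have T3 : ∀ r < n - i, ∀ hi : i < n, (TT n i q (mvf (n - i)) r ⟨i, hi⟩ : ℕ) =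
      if r = 0 then i else if r = 1 then i + 2 else if r + 1 = n - i then i + 1 else n - r + 1 := by
    intro r hr hi
    rcases r with _ | r
    · simp [TT]
    · by_cases h' : r + 2 < n - i
      · rw [T1 r h']; simp only [UU]; split_ifs <;> first | omega | contradiction
      · obtain h' : r + 1 = n - i - 1 := by omega
        rw [h', T2]; simp only []; split_ifs <;> first | omega | contradiction
  refine ⟨_, spec_step n i (by omega) q hs (mvf (n - i)) (movesList_eq _ (by omega)) ?_ ?_, ?_⟩
  · intro r hr x hx
    apply Fin.ext
    rcases r with _ | r
    · simp [TT]
    · by_cases h' : r + 2 < n - i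
      · rw [T1 r h']; simp only [UU]; rw [if_pos hx]
      · obtain h' : r + 1 = n - i - 1 := by omega
        rw [h', T2, if_pos hx]
  · intro r s hrs hs
    rw [Ne, Fin.ext_iff, T3 r (by omega), T3 s hs]
    split_ifs <;> first | omega | contradiction
  · intro x
    have h1 := T2 (q x)
    rw [hq'] at h1
    rw [Equiv.Perm.mul_apply, h1]
    have hx := x.2
    simp only [qn]; split_ifs <;> first | omega | contradiction

def oo (i h r : ℕ) : ℕ :=
  if r = 0 then i else if r = 2 * h then i + 1 else if r = 1 then i + 2
  else if r < h then i + 2 * r + 1 else if r = h then i + 3 else i + 2 * (r - h) + 2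

set_option maxHeartbeats 4000000 in
theorem oo_surj (i h x : ℕ) (hh : 1 ≤ h) (h1 : i ≤ x) (h2 : x ≤ i + 2 * h) :
    ∃ r ≤ 2 * h, oo i h r = x := by
  by_cases a1 : x = i
  · exact ⟨0, by omega, by simp [oo, a1]⟩
  by_cases a2 : x = i + 1
  · exact ⟨2 * h, by omega, by simp only [oo]; split_ifs <;> first | omega | contradiction⟩
  by_cases a3 : x = i + 2
  · exact ⟨1, by omega, by simp only [oo]; split_ifs <;> first | omega | contradiction⟩
  by_cases a4 : x = i + 3
  · exact ⟨h, by omega, by simp only [oo]; split_ifs <;> first | omega | contradiction⟩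
  by_cases a5 : (x - i) % 2 = 1
  · exact ⟨(x - i) / 2, by omega, by simp only [oo]; split_ifs <;> first | omega | contradiction⟩
  · exact ⟨(x - i) / 2 - 1 + h, by omega, by simp only [oo]; split_ifs <;> first | omega | contradiction⟩

set_option maxHeartbeats 4000000 in
theorem oo_step (n i h r y z : ℕ) (hh : 1 ≤ h) (hn : n = i + (2 * h + 1)) (hr : r + 1 ≤ 2 * h)
    (hy : y = oo i h r)
    (hz : z = if y = i then i + 1 else if y = i + 1 then i else y) :
    qn n (i + 1) z = oo i h (r + 1) := by
  unfold oo at hy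
  split_ifs at hy <;> split_ifs at hz <;>
    first
    | (exfalso; omega)
    | (simp only [qn, oo]; (repeat' (first | (exfalso; omega) | split)) <;> omega)

set_option maxHeartbeats 4000000 in
theorem step_odd (n i h : ℕ) (hh : 1 ≤ h) (hn : n = i + (2 * h + 1)) (q : Equiv.Perm (Fin n))
    (hs : Spec n (i + 1) q)
    (hq : ∀ x : Fin n, (q x : ℕ) = qn n (i + 1) x) :
    ∃ q : Equiv.Perm (Fin n), Spec n i q ∧ ∀ x : Fin n, (q x : ℕ) = qn n i x := by
  have hi : i < n := by omega
  set c := q * Mv n i true with hc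
  have T0 : ∀ r, TT n i q (mvf (n - i)) r = c ^ r := by
    intro r
    induction r with
    | zero => rfl
    | succ r ih =>
      have : mvf (n - i) r = true := by simp [mvf]; omega
      rw [TT, ih, this, pow_succ, mul_assoc]
  have hcv : ∀ x : Fin n, (c x : ℕ) = qn n (i + 1)
      (if (x : ℕ) = i then i + 1 else if (x : ℕ) = i + 1 then i else x) := by
    intro x
    rw [hc, Equiv.Perm.mul_apply, hq, Mv_true n i (by omega)]
  have cfix : ∀ x : Fin n, (x : ℕ) < i → c x = x := by
    intro x hx
    apply Fin.ext; rw [hcv]; simp only [qn]; split_ifs <;> first | omega | contradiction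
  have cpfix : ∀ r, ∀ x : Fin n, (x : ℕ) < i → (c ^ r) x = x := by
    intro r x hx
    exact Equiv.Perm.pow_apply_eq_self_of_apply_eq_self (cfix x hx) r
  have orb : ∀ r, r ≤ 2 * h → ((c ^ r) ⟨i, hi⟩ : ℕ) = oo i h r := by
    intro r
    induction r with
    | zero => intro _; simp [oo]
    | succ r ih =>
      intro hr
      rw [pow_succ', Equiv.Perm.mul_apply, hcv, ih (by omega)]
      exact oo_step n i h r _ _ hh hn hr rfl rfl
  have hper : (c ^ (2 * h + 1)) ⟨i, hi⟩ = ⟨i, hi⟩ := by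
    apply Fin.ext
    have ho : oo i h (2 * h) = i + 1 := by
      rw [oo, if_neg (by omega), if_pos rfl]
    rw [pow_succ', Equiv.Perm.mul_apply, hcv, orb _ le_rfl, ho, if_neg (by omega), if_pos rfl, qn,
      if_pos (by omega)]
  have hone : c ^ (2 * h + 1) = 1 := by
    apply Equiv.ext
    intro x
    by_cases hx : (x : ℕ) < i
    · rw [cpfix _ x hx]; rfl
    · obtain ⟨r, hr, hrx⟩ := oo_surj i h x hh (by omega) (by omega)
      have : x = (c ^ r) ⟨i, hi⟩ := by apply Fin.ext; rw [orb r hr, hrx]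
      rw [this, ← Equiv.Perm.mul_apply, ← pow_add, add_comm, pow_add, Equiv.Perm.mul_apply, hper]
      rfl
  refine ⟨_, spec_step n i (by omega) q hs (mvf (n - i)) (movesList_eq _ (by omega)) ?_ ?_, ?_⟩
  · intro r hr x hx
    rw [T0, cpfix r x hx]
  · intro r s hrs hs
    rw [Ne, Fin.ext_iff, T0, T0, orb r (by omega), orb s (by omega)]
    simp only [oo]
    split_ifs <;> first | omega | contradiction
  · intro x
    have e : n - i - 1 = 2 * h := by omega
    have hMM : Mv n i true * Mv n i true = 1 := by
      ext y
      rw [Equiv.Perm.mul_apply, Mv_true n i (by omega), Mv_true n i (by omega)]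
      simp only [Equiv.Perm.one_apply]
      split_ifs <;> first | omega | contradiction
    have hqc : q = c * Mv n i true := by rw [hc, mul_assoc, hMM, mul_one]
    have : c ^ (2 * h) * q = Mv n i true := by
      conv_lhs => rw [hqc, ← mul_assoc, ← pow_succ, hone, one_mul]
    rw [e, T0, this, Mv_true n i (by omega)]
    simp only [qn]
    split_ifs <;> first | omega | contradiction

theorem spec_all (n m : ℕ) : ∀ i, n = i + m →
    ∃ q : Equiv.Perm (Fin n), Spec n i q ∧ ∀ x : Fin n, (q x : ℕ) = qn n i x := by
  induction m with
  | zero =>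
    intro i h
    exact ⟨1, spec_base n i (by omega), fun x => by rw [qn, if_pos (by omega)]; rfl⟩
  | succ m ih =>
    intro i h
    by_cases h1 : m = 0
    · exact ⟨1, spec_base n i (by omega), fun x => by rw [qn, if_pos (by omega)]; rfl⟩
    obtain ⟨q, hs, hq⟩ := ih (i + 1) (by omega)
    by_cases h2 : m = 1
    · exact step_two n i (by omega) q hs hq
    by_cases h3 : (n - i) % 2 = 0
    · exact step_even n i (by omega) h3 q hs hq
    · exact step_odd n i (m / 2) (by omega) (by omega) q hs hq

/-- `Gen n` has length `n!`, its entries are pairwise distinct, and consequently every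
bijection of `Fin n` occurs exactly once in it. -/
theorem gen_length_nodup_count (n : ℕ) :
    (Gen n).length = n.factorial ∧ (Gen n).Nodup ∧
      ∀ σ : Equiv.Perm (Fin n), (Gen n).count σ = 1 := by
  obtain ⟨q, hs, -⟩ := spec_all n n 0 (by omega)
  have h1 : (Gen n).length = n.factorial := by simpa [Gen] using hs.len n 1 (by omega)
  have h2 : (Gen n).Nodup := hs.nodup n 1 (by omega)
  refine ⟨h1, h2, fun σ => List.count_eq_one_of_mem h2 ?_⟩
  have h3 : (Gen n).toFinset = Finset.univ := by
    apply Finset.eq_univ_of_card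
    rw [List.toFinset_card_of_nodup h2, h1, Fintype.card_perm, Fintype.card_fin]
  rw [← List.mem_toFinset, h3]
  exact Finset.mem_univ σ
end

section
/- Let k ≥ 5 be odd and consider arrangements of Fin (k+1). Applying to the identity arrangement, in order, the operations C, L, C, then the pair (R, C) repeated k−2 times, then L, C, yields the arrangement a with a(0) = 1, a(1) = 4, a(2) = 3, a(j) = j+2 for 3 ≤ j ≤ k−2, a(k−1) = 2 and a(k) = 0, i.e., the arrangement (1,4,3,5,6,…,k,2,0). -/
/-- The move `C` on arrangements of `Fin (k+1)`: exchange the entries at positions 1 and 2. -/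
def Cmove (k : ℕ) (a : Equiv.Perm (Fin (k + 1))) : Equiv.Perm (Fin (k + 1)) :=
  if h : 2 < k + 1 then (Equiv.swap ⟨1, by omega⟩ ⟨2, h⟩).trans a else a

/-- The move `L` on arrangements of `Fin (k+1)`: exchange the entries at positions 0 and 1. -/
def Lmove (k : ℕ) (a : Equiv.Perm (Fin (k + 1))) : Equiv.Perm (Fin (k + 1)) :=
  if h : 1 < k + 1 then (Equiv.swap ⟨0, by omega⟩ ⟨1, h⟩).trans a else a

/-- The move `R` on arrangements of `Fin (k+1)`: move the entry at position `k` to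
position 0, shifting the entries at positions `0, …, k-1` one position to the right. -/
def Rmove (k : ℕ) (a : Equiv.Perm (Fin (k + 1))) : Equiv.Perm (Fin (k + 1)) :=
  (cyc (⟨0, by omega⟩ : Fin (k + 1)) ⟨k, by omega⟩).trans a

theorem cyc_val (k : ℕ) (p : ℕ) (hp : p < k + 1) :
    (cyc (⟨0, by omega⟩ : Fin (k + 1)) ⟨k, by omega⟩ ⟨p, hp⟩).val =
      if p = 0 then k else p - 1 := by
  have hl : ((List.finRange (k+1)).filter
      (fun p => decide ((⟨0, by omega⟩ : Fin (k + 1)) ≤ p ∧ p ≤ ⟨k, by omega⟩)))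
      = List.finRange (k+1) := by
    rw [List.filter_eq_self]
    intro a _
    have := a.isLt
    simp only [decide_eq_true_eq, Fin.le_def]
    omega
  unfold cyc
  rw [hl]
  have hnd : (List.finRange (k+1)).reverse.Nodup :=
    List.nodup_reverse.2 (List.nodup_finRange _)
  have hlen : (List.finRange (k+1)).reverse.length = k + 1 := by simp
  have key := List.formPerm_apply_getElem _ hnd (k - p) (by rw [hlen]; omega)
  have e : (List.finRange (k+1)).reverse[k - p]'(by rw [hlen]; omega) = ⟨p, hp⟩ := by
    ext
    simp
    omega
  rw [e] at key
  rw [key]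
  simp only [List.getElem_reverse, List.getElem_finRange, List.length_reverse,
    List.length_finRange, Fin.val_cast]
  split_ifs with h
  · subst h
    simp
  · rw [Nat.mod_eq_of_lt (by omega)]
    omega

theorem Rmove_val (k : ℕ) (b : Equiv.Perm (Fin (k + 1))) (f : ℕ → ℕ)
    (hb : ∀ j (hj : j < k + 1), (b ⟨j, hj⟩).val = f j) (j : ℕ) (hj : j < k + 1) :
    (Rmove k b ⟨j, hj⟩).val = f (if j = 0 then k else j - 1) := by
  unfold Rmove
  rw [Equiv.trans_apply, ← cyc_val k j hj, ← hb _ (Fin.isLt _)]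

theorem Cmove_val (k : ℕ) (hk : 2 ≤ k) (b : Equiv.Perm (Fin (k + 1))) (f : ℕ → ℕ)
    (hb : ∀ j (hj : j < k + 1), (b ⟨j, hj⟩).val = f j) (j : ℕ) (hj : j < k + 1) :
    (Cmove k b ⟨j, hj⟩).val = f (if j = 1 then 2 else if j = 2 then 1 else j) := by
  unfold Cmove
  rw [dif_pos (by omega), Equiv.trans_apply, Equiv.swap_apply_def]
  simp only [Fin.mk.injEq]
  split_ifs <;> exact hb _ _

theorem Lmove_val (k : ℕ) (hk : 2 ≤ k) (b : Equiv.Perm (Fin (k + 1))) (f : ℕ → ℕ)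
    (hb : ∀ j (hj : j < k + 1), (b ⟨j, hj⟩).val = f j) (j : ℕ) (hj : j < k + 1) :
    (Lmove k b ⟨j, hj⟩).val = f (if j = 0 then 1 else if j = 1 then 0 else j) := by
  unfold Lmove
  rw [dif_pos (by omega), Equiv.trans_apply, Equiv.swap_apply_def]
  simp only [Fin.mk.injEq]
  split_ifs <;> exact hb _ _

/-- Entries after `t` rounds. -/
def stF (k t j : ℕ) : ℕ :=
  if j = 0 then (if t = 0 then 2 else k + 1 - t) else if j = 1 then 1
  else if j ≤ t then k + j - t else if j = t + 1 then 2 else if j = t + 2 then 0 else j - t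

theorem iter_val (k : ℕ) (hk : 5 ≤ k) (t : ℕ) (ht : t ≤ k - 2) (j : ℕ) (hj : j < k + 1) :
    (((fun b => Cmove k (Rmove k b))^[t] (Cmove k (Lmove k (Cmove k 1)))) ⟨j, hj⟩).val
      = stF k t j := by
  induction t generalizing j with
  | zero =>
    rw [Function.iterate_zero, id,
      Cmove_val k (by omega) _ _ (Lmove_val k (by omega) _ _
        (Cmove_val k (by omega) 1 (fun j => j) (fun j hj => rfl)))]
    unfold stF
    grind
  | succ t ih =>
    rw [Function.iterate_succ_apply',
      Cmove_val k (by omega) _ _ (Rmove_val k _ _ (fun j hj => ih (by omega) j hj))]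
    clear ih
    obtain ⟨p, hp⟩ : ∃ p, p = (if j = 1 then 2 else if j = 2 then 1 else j) := ⟨_, rfl⟩
    rw [← hp]
    obtain ⟨q, hq⟩ : ∃ q, q = (if p = 0 then k else p - 1) := ⟨_, rfl⟩
    rw [← hq]
    have hq' : (j = 0 ∧ q = k) ∨ (j = 1 ∧ q = 1) ∨ (j = 2 ∧ q = 0) ∨ (3 ≤ j ∧ q = j - 1) := by
      split_ifs at hp hq <;> omega
    clear hp hq
    unfold stF
    rw [if_neg (Nat.succ_ne_zero t)]
    split_ifs <;> omega

/-- For odd `k ≥ 5`, applying to the identity arrangement of `Fin (k+1)`, in order,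
`C`, `L`, `C`, then the pair `(R, C)` repeated `k - 2` times, then `L`, `C`, yields the
arrangement `(1,4,3,5,6,…,k,2,0)`. -/
theorem lemma_one (k : ℕ) (hk : 5 ≤ k) (hodd : Odd k)
    (a : Equiv.Perm (Fin (k + 1)))
    (ha : a = Cmove k (Lmove k
      ((fun b => Cmove k (Rmove k b))^[k - 2] (Cmove k (Lmove k (Cmove k 1)))))) :
    a ⟨0, by omega⟩ = ⟨1, by omega⟩ ∧
    a ⟨1, by omega⟩ = ⟨4, by omega⟩ ∧
    a ⟨2, by omega⟩ = ⟨3, by omega⟩ ∧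
    (∀ j : ℕ, ∀ _h3 : 3 ≤ j, ∀ _hj : j ≤ k - 2,
      a ⟨j, by omega⟩ = ⟨j + 2, by omega⟩) ∧
    a ⟨k - 1, by omega⟩ = ⟨2, by omega⟩ ∧
    a ⟨k, by omega⟩ = ⟨0, by omega⟩ := by
  have H := Cmove_val k (by omega) _ _ (Lmove_val k (by omega) _ _
      (fun j hj => iter_val k hk (k - 2) le_rfl j hj))
  rw [← ha] at H
  refine ⟨?_, ?_, ?_, fun j h3 hj => ?_, ?_, ?_⟩ <;>
    (apply Fin.ext; rw [H]; unfold stF; grind)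
end

section
/- Let k ≥ 5 be odd and consider arrangements of Fin (k+1). Define B₀ = C(id), B₁ = C(L(B₀)), B_j = C(R(B_{j−1})) for 2 ≤ j ≤ k−1, and B_k = C(L(B_{k−1})). Then the first entries B₀(0), B₁(0), …, B_k(0) are pairwise distinct; equivalently, {B_j(0) : 0 ≤ j ≤ k} = Fin (k+1). -/
lemma cyc_eq_aux (k : ℕ) :
    cyc (⟨0, by omega⟩ : Fin (k + 1)) ⟨k, by omega⟩ = (List.finRange (k+1)).formPerm⁻¹ := by
  unfold cyc
  rw [List.filter_eq_self.2, List.formPerm_reverse]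
  intro a _
  have := a.2
  simp [Fin.le_def]
  omega

lemma cyc_succ_aux (k p : ℕ) (hp : p + 1 < k + 1) :
    cyc (⟨0, by omega⟩ : Fin (k + 1)) ⟨k, by omega⟩ ⟨p+1, hp⟩ = ⟨p, by omega⟩ := by
  rw [cyc_eq_aux, Equiv.Perm.inv_eq_iff_eq]
  have := List.formPerm_apply_lt_getElem (List.finRange (k+1)) (List.nodup_finRange _) p
    (by simpa using hp)
  simpa using this.symm

lemma cyc_zero_aux (k : ℕ) :
    cyc (⟨0, by omega⟩ : Fin (k + 1)) ⟨k, by omega⟩ ⟨0, by omega⟩ = ⟨k, by omega⟩ := by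
  rw [cyc_eq_aux, Equiv.Perm.inv_eq_iff_eq]
  have := List.formPerm_apply_getElem (List.finRange (k+1)) (List.nodup_finRange _) k
    (by simp)
  simpa using this.symm

lemma R_zero_aux (k : ℕ) (a : Equiv.Perm (Fin (k + 1))) :
    Rmove k a ⟨0, by omega⟩ = a ⟨k, by omega⟩ := by
  simp only [Rmove, Equiv.trans_apply, cyc_zero_aux]

lemma R_succ_aux (k : ℕ) (a : Equiv.Perm (Fin (k + 1))) (p : ℕ) (hp : p + 1 < k + 1) :
    Rmove k a ⟨p + 1, hp⟩ = a ⟨p, by omega⟩ := by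
  simp only [Rmove, Equiv.trans_apply, cyc_succ_aux]

lemma C_aux (k : ℕ) (hk : 5 ≤ k) (h0 : 0 < k + 1) (h1 : 1 < k + 1) (h2 : 2 < k + 1)
    (a : Equiv.Perm (Fin (k + 1))) :
    Cmove k a ⟨0, h0⟩ = a ⟨0, h0⟩ ∧ Cmove k a ⟨1, h1⟩ = a ⟨2, h2⟩ ∧
    Cmove k a ⟨2, h2⟩ = a ⟨1, h1⟩ ∧
    ∀ p (hp : p < k + 1), 3 ≤ p → Cmove k a ⟨p, hp⟩ = a ⟨p, hp⟩ := by
  have h : 2 < k + 1 := by omega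
  simp only [Cmove, h, dif_pos, Equiv.trans_apply]
  refine ⟨?_, ?_, ?_, ?_⟩
  · rw [Equiv.swap_apply_of_ne_of_ne] <;> simp [Fin.ext_iff]
  · rw [Equiv.swap_apply_left]
  · rw [Equiv.swap_apply_right]
  · intro p hp h3
    rw [Equiv.swap_apply_of_ne_of_ne] <;> simp only [ne_eq, Fin.mk.injEq] <;> omega

lemma L_aux (k : ℕ) (hk : 5 ≤ k) (h0 : 0 < k + 1) (h1 : 1 < k + 1) (h2 : 2 < k + 1)
    (a : Equiv.Perm (Fin (k + 1))) :
    Lmove k a ⟨0, h0⟩ = a ⟨1, h1⟩ ∧ Lmove k a ⟨1, h1⟩ = a ⟨0, h0⟩ ∧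
    ∀ p (hp : p < k + 1), 2 ≤ p → Lmove k a ⟨p, hp⟩ = a ⟨p, hp⟩ := by
  have h : 1 < k + 1 := by omega
  simp only [Lmove, h, dif_pos, Equiv.trans_apply]
  refine ⟨?_, ?_, ?_⟩
  · rw [Equiv.swap_apply_left]
  · rw [Equiv.swap_apply_right]
  · intro p hp h3
    rw [Equiv.swap_apply_of_ne_of_ne] <;> simp only [ne_eq, Fin.mk.injEq] <;> omega

/-- For odd `k ≥ 5`, let `B₀ = C(id)`, `B₁ = C(L(B₀))`, `B_j = C(R(B_{j-1}))` for
`2 ≤ j ≤ k - 1`, and `B_k = C(L(B_{k-1}))`.  Then the first entries `B₀ 0, B₁ 0, …, B_k 0`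
are pairwise distinct; equivalently, they exhaust all of `Fin (k+1)`. -/
theorem first_entries_distinct (k : ℕ) (hk : 5 ≤ k) (hodd : Odd k)
    (B : ℕ → Equiv.Perm (Fin (k + 1)))
    (hB0 : B 0 = Cmove k 1)
    (hB1 : B 1 = Cmove k (Lmove k (B 0)))
    (hBj : ∀ j : ℕ, 2 ≤ j → j ≤ k - 1 → B j = Cmove k (Rmove k (B (j - 1))))
    (hBk : B k = Cmove k (Lmove k (B (k - 1)))) :
    (∀ j₁ j₂ : ℕ, j₁ ≤ k → j₂ ≤ k →
      B j₁ ⟨0, by omega⟩ = B j₂ ⟨0, by omega⟩ → j₁ = j₂) ∧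
    (∀ v : Fin (k + 1), ∃ j : ℕ, j ≤ k ∧ B j ⟨0, by omega⟩ = v) := by
  obtain ⟨c0, c1, c2, c3⟩ := C_aux k hk (by omega) (by omega) (by omega) 1
  rw [← hB0] at c0 c1 c2 c3
  obtain ⟨d0, d1, d2, d3⟩ := C_aux k hk (by omega) (by omega) (by omega) (Lmove k (B 0))
  rw [← hB1] at d0 d1 d2 d3
  obtain ⟨l0, l1, l2⟩ := L_aux k hk (by omega) (by omega) (by omega) (B 0)
  have key : ∀ j, 1 ≤ j → j ≤ k - 1 → B j ⟨1, by omega⟩ = ⟨1, by omega⟩ ∧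
      ∀ p (hp : p < k + 1), j + 2 ≤ p → B j ⟨p, hp⟩ = ⟨p - (j - 1), by omega⟩ := by
    intro j hj
    induction j, hj using Nat.le_induction with
    | base =>
      intro _
      refine ⟨?_, ?_⟩
      · rw [d1, l2 _ _ le_rfl, c2]; rfl
      · intro p hp h3
        rw [d3 p hp h3, l2 p hp (by omega), c3 p hp h3]
        simp only [Equiv.Perm.coe_one, id_eq, Fin.mk.injEq]
        omega
    | succ j hj ih =>
      intro hjk
      obtain ⟨i1, i2⟩ := ih (by omega)
      have e := hBj (j+1) (by omega) hjk
      rw [Nat.add_sub_cancel] at e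
      obtain ⟨e0, e1, e2, e3⟩ := C_aux k hk (by omega) (by omega) (by omega) (Rmove k (B j))
      rw [← e] at e0 e1 e2 e3
      refine ⟨?_, ?_⟩
      · rw [e1, R_succ_aux k (B j) 1, i1]
      · intro p hp h3
        obtain ⟨q, rfl⟩ : ∃ q, p = q + 1 := ⟨p - 1, by omega⟩
        rw [e3 _ hp (by omega), R_succ_aux, i2 q (by omega) (by omega)]
        simp only [Fin.mk.injEq]
        omega
  have v0 : (B 0 ⟨0, by omega⟩).val = 0 := by rw [c0]; rfl
  have v1 : (B 1 ⟨0, by omega⟩).val = 2 := by rw [d0, l0, c1]; rfl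
  have vj : ∀ j, 2 ≤ j → j ≤ k - 1 → (B j ⟨0, by omega⟩).val = k + 2 - j := by
    intro j h2 hj
    rw [hBj j h2 hj, (C_aux k hk (by omega) (by omega) (by omega) _).1, R_zero_aux,
      (key (j-1) (by omega) (by omega)).2 k (by omega) (by omega)]
    simp only
    omega
  have vk : (B k ⟨0, by omega⟩).val = 1 := by
    rw [hBk, (C_aux k hk (by omega) (by omega) (by omega) _).1, (L_aux k hk (by omega) (by omega) (by omega) _).1, (key (k-1) (by omega) le_rfl).1]
  have val : ∀ j, j ≤ k → (B j ⟨0, by omega⟩).val =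
      if j = 0 then 0 else if j = 1 then 2 else if j = k then 1 else k + 2 - j := by
    intro j hj
    split_ifs with h0 h1 h2
    · subst h0; exact v0
    · subst h1; exact v1
    · subst h2; exact vk
    · exact vj j (by omega) (by omega)
  refine ⟨?_, ?_⟩
  · intro a b ha hb h
    have h' := congrArg Fin.val h
    rw [val a ha, val b hb] at h'
    split_ifs at h' <;> omega
  · intro v
    have hv := v.2
    by_cases h0 : v.val = 0
    · exact ⟨0, by omega, Fin.ext (by omega)⟩
    by_cases h1 : v.val = 2
    · exact ⟨1, by omega, Fin.ext (by omega)⟩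
    by_cases h2 : v.val = 1
    · exact ⟨k, le_rfl, Fin.ext (by omega)⟩
    refine ⟨k + 2 - v.val, by omega, Fin.ext ?_⟩
    rw [vj _ (by omega) (by omega)]
    omega
end

section
/- Let k ≥ 5 be odd and consider arrangements of Fin (k+1). For 1 ≤ j ≤ k−2, the arrangement obtained from the identity by applying, in order, C, L, C and then the pair (R, C) repeated j times is the arrangement a with a(0) = k−j+1, a(1) = 1, a(p) = k−j+p for 2 ≤ p ≤ j, a(j+1) = 2, a(j+2) = 0, and a(p) = p−j for j+3 ≤ p ≤ k; i.e., the arrangement (k−j+1, 1, k−j+2, …, k, 2, 0, 3, 4, …, k−j). -/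
theorem cyc_full (k p : ℕ) (hp : p < k + 1) (h0 : 0 < k + 1) (hkk : k < k + 1)
    (hq : (if p = 0 then k else p - 1) < k + 1) :
    cyc (⟨0, h0⟩ : Fin (k + 1)) ⟨k, hkk⟩ ⟨p, hp⟩
      = ⟨if p = 0 then k else p - 1, hq⟩ := by
  have hf : ((List.finRange (k+1)).filter (fun p => decide ((⟨0, h0⟩ : Fin (k + 1)) ≤ p ∧ p ≤ ⟨k, hkk⟩)))
      = List.finRange (k+1) := by
    rw [List.filter_eq_self]
    intro q _
    simp only [decide_eq_true_eq, Fin.le_def]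
    omega
  unfold cyc
  rw [hf]
  have hn : (List.finRange (k+1)).reverse.Nodup :=
    List.nodup_reverse.2 (List.nodup_finRange _)
  have hl : k - p < (List.finRange (k+1)).reverse.length := by simp
  have h := List.formPerm_apply_getElem _ hn (k - p) hl
  simp only [List.getElem_reverse, List.getElem_finRange, List.length_reverse,
    List.length_finRange] at h
  have e : (⟨p, hp⟩ : Fin (k+1)) = Fin.cast (by simp) (⟨k + 1 - 1 - (k - p), by omega⟩ : Fin (k+1)) := by
    ext; simp; omega
  rw [e]
  refine (Eq.trans (by congr) h).trans ?_
  ext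
  simp
  split_ifs with hz
  · subst hz; simp
  · rw [Nat.mod_eq_of_lt (by omega)]; omega

theorem Rmove_val_s3 (k : ℕ) (a : Equiv.Perm (Fin (k + 1))) (p : ℕ) (hp : p < k + 1)
    (hq : (if p = 0 then k else p - 1) < k + 1) :
    Rmove k a ⟨p, hp⟩ = a ⟨if p = 0 then k else p - 1, hq⟩ := by
  unfold Rmove
  rw [Equiv.trans_apply, cyc_full k p hp _ _ hq]

theorem Cmove_val_s3 (k : ℕ) (hk : 5 ≤ k) (a : Equiv.Perm (Fin (k + 1))) (p : ℕ) (hp : p < k + 1)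
    (hq : (if p = 1 then 2 else if p = 2 then 1 else p) < k + 1) :
    Cmove k a ⟨p, hp⟩ = a ⟨if p = 1 then 2 else if p = 2 then 1 else p, hq⟩ := by
  unfold Cmove
  rw [dif_pos (by omega), Equiv.trans_apply, Equiv.swap_apply_def]
  congr 1
  ext
  simp only [Fin.mk.injEq]
  split_ifs <;> rfl

theorem Lmove_val_s3 (k : ℕ) (hk : 5 ≤ k) (a : Equiv.Perm (Fin (k + 1))) (p : ℕ) (hp : p < k + 1)
    (hq : (if p = 0 then 1 else if p = 1 then 0 else p) < k + 1) :
    Lmove k a ⟨p, hp⟩ = a ⟨if p = 0 then 1 else if p = 1 then 0 else p, hq⟩ := by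
  unfold Lmove
  rw [dif_pos (by omega), Equiv.trans_apply, Equiv.swap_apply_def]
  congr 1
  ext
  simp only [Fin.mk.injEq]
  split_ifs <;> rfl

theorem Rbound (k : ℕ) (hk : 5 ≤ k) (p : ℕ) (hp : p < k + 1) :
    (if p = 0 then k else p - 1) < k + 1 := by
  split_ifs <;> omega

theorem Cbound (k : ℕ) (hk : 5 ≤ k) (p : ℕ) (hp : p < k + 1) :
    (if p = 1 then 2 else if p = 2 then 1 else p) < k + 1 := by
  split_ifs <;> omega

theorem Lbound (k : ℕ) (hk : 5 ≤ k) (p : ℕ) (hp : p < k + 1) :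
    (if p = 0 then 1 else if p = 1 then 0 else p) < k + 1 := by
  split_ifs <;> omega

theorem rounds_val (k : ℕ) (hk : 5 ≤ k) (j : ℕ) (hj1 : 1 ≤ j) : j ≤ k - 2 →
    ∀ (p : ℕ) (hp : p < k + 1),
    (((fun b => Cmove k (Rmove k b))^[j] (Cmove k (Lmove k (Cmove k 1)))) ⟨p, hp⟩ : Fin (k+1)).val
    = if p = 0 then k - j + 1 else if p = 1 then 1 else if p ≤ j then k - j + p
      else if p = j + 1 then 2 else if p = j + 2 then 0 else p - j := by
  induction j, hj1 using Nat.le_induction with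
  | base =>
    intro _ p hp
    have h1 := Cbound k hk p hp
    have h2 := Rbound k hk _ h1
    have h3 := Cbound k hk _ h2
    have h4 := Lbound k hk _ h3
    have h5 := Cbound k hk _ h4
    rw [Function.iterate_one, Cmove_val_s3 k hk _ _ _ h1, Rmove_val_s3 _ _ _ _ h2,
      Cmove_val_s3 k hk _ _ _ h3, Lmove_val_s3 k hk _ _ _ h4,
      Cmove_val_s3 k hk _ _ _ h5, Equiv.Perm.one_apply]
    dsimp only
    clear h1 h2 h3 h4 h5
    grind
  | succ j hj ih =>
    intro h p hp
    have h1 := Cbound k hk p hp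
    have h2 := Rbound k hk _ h1
    rw [Function.iterate_succ_apply', Cmove_val_s3 k hk _ _ _ h1, Rmove_val_s3 _ _ _ _ h2, ih (by omega)]
    clear ih h1 h2
    have hq : p = 0 ∨ p = 1 ∨ p = 2 ∨ 3 ≤ p := by omega
    rcases hq with rfl | rfl | rfl | hq
    · simp; split_ifs <;> omega
    · simp
    · simp; split_ifs <;> omega
    · rw [if_neg (show ¬ p = 1 by omega), if_neg (show ¬ p = 2 by omega), if_neg (show ¬ p = 0 by omega)]
      split_ifs <;> omega

/-- For odd `k ≥ 5` and `1 ≤ j ≤ k - 2`, the arrangement obtained from the identity by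
applying, in order, `C`, `L`, `C` and then the pair `(R, C)` repeated `j` times is
`(k-j+1, 1, k-j+2, …, k, 2, 0, 3, 4, …, k-j)`; that is, the arrangement `a` with
`a 0 = k-j+1`, `a 1 = 1`, `a p = k-j+p` for `2 ≤ p ≤ j`, `a (j+1) = 2`, `a (j+2) = 0`,
and `a p = p-j` for `j+3 ≤ p ≤ k`. -/
theorem after_j_right_rounds (k : ℕ) (hk : 5 ≤ k) (hodd : Odd k)
    (j : ℕ) (hj1 : 1 ≤ j) (hj2 : j ≤ k - 2)
    (a : Equiv.Perm (Fin (k + 1)))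
    (ha : a = (fun b => Cmove k (Rmove k b))^[j] (Cmove k (Lmove k (Cmove k 1)))) :
    a ⟨0, by omega⟩ = ⟨k - j + 1, by omega⟩ ∧
    a ⟨1, by omega⟩ = ⟨1, by omega⟩ ∧
    (∀ p : ℕ, ∀ _h2 : 2 ≤ p, ∀ _hp : p ≤ j,
      a ⟨p, by omega⟩ = ⟨k - j + p, by omega⟩) ∧
    a ⟨j + 1, by omega⟩ = ⟨2, by omega⟩ ∧
    a ⟨j + 2, by omega⟩ = ⟨0, by omega⟩ ∧
    (∀ p : ℕ, ∀ _h3 : j + 3 ≤ p, ∀ _hp : p ≤ k,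
      a ⟨p, by omega⟩ = ⟨p - j, by omega⟩) := by
  subst ha
  have H := rounds_val k hk j hj1 hj2
  refine ⟨?_, ?_, fun p h2 hp => ?_, ?_, ?_, fun p h3 hp => ?_⟩ <;>
    (apply Fin.ext; rw [H]; grind)
end

section
/- Let k ≥ 6 be even. The position permutation π of Fin (k+1) defined by π(0) = 1, π(1) = 2, π(2) = 5, π(3) = 4, π(p) = p+2 for 4 ≤ p ≤ k−2, π(k−1) = 3 and π(k) = 0 is a single cycle of length k+1 (its cycle on positions visits all k+1 positions). -/
/-- For even `k ≥ 6`, the position permutation `π` of `Fin (k+1)` with `π 0 = 1`,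
`π 1 = 2`, `π 2 = 5`, `π 3 = 4`, `π p = p + 2` for `4 ≤ p ≤ k - 2`, `π (k-1) = 3` and
`π k = 0` is a single cycle of length `k + 1`: its cycle visits all `k + 1` positions. -/
theorem pi_is_single_cycle (k : ℕ) (hk : 6 ≤ k) (hke : Even k)
    (π : Equiv.Perm (Fin (k + 1)))
    (h0 : π ⟨0, by omega⟩ = ⟨1, by omega⟩)
    (h1 : π ⟨1, by omega⟩ = ⟨2, by omega⟩)
    (h2 : π ⟨2, by omega⟩ = ⟨5, by omega⟩)
    (h3 : π ⟨3, by omega⟩ = ⟨4, by omega⟩)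
    (hp : ∀ p : ℕ, ∀ _h4 : 4 ≤ p, ∀ _hp : p ≤ k - 2,
      π ⟨p, by omega⟩ = ⟨p + 2, by omega⟩)
    (hk1 : π ⟨k - 1, by omega⟩ = ⟨3, by omega⟩)
    (hkk : π ⟨k, by omega⟩ = ⟨0, by omega⟩) :
    π.IsCycle ∧ π.support = Finset.univ := by
  have step : ∀ {x y : Fin (k + 1)}, π x = y → π.SameCycle ⟨0, by omega⟩ x →
      π.SameCycle ⟨0, by omega⟩ y := by
    intro x y hxy hx
    rw [← hxy]
    exact Equiv.Perm.sameCycle_apply_right.mpr hx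
  have s0 : π.SameCycle ⟨0, by omega⟩ ⟨0, by omega⟩ := Equiv.Perm.SameCycle.refl _ _
  have s1 := step h0 s0
  have s2 := step h1 s1
  have s5 := step h2 s2
  have sodd : ∀ j : ℕ, ∀ h : 5 + 2 * j < k + 1,
      π.SameCycle ⟨0, by omega⟩ ⟨5 + 2 * j, h⟩ := by
    intro j
    induction j with
    | zero => intro h; exact s5
    | succ j ih =>
      intro h
      exact step (hp (5 + 2 * j) (by omega) (by obtain ⟨m, hm⟩ := hke; omega)) (ih (by omega))
  obtain ⟨m, hm⟩ := hke
  have sk1 : π.SameCycle ⟨0, by omega⟩ ⟨k - 1, by omega⟩ := by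
    have h := sodd (m - 3) (by omega)
    have e : (⟨5 + 2 * (m - 3), by omega⟩ : Fin (k + 1)) = ⟨k - 1, by omega⟩ := by
      apply Fin.ext
      show 5 + 2 * (m - 3) = k - 1
      omega
    rwa [e] at h
  have s3 := step hk1 sk1
  have s4 := step h3 s3
  have seven : ∀ j : ℕ, ∀ h : 4 + 2 * j < k + 1,
      π.SameCycle ⟨0, by omega⟩ ⟨4 + 2 * j, h⟩ := by
    intro j
    induction j with
    | zero => intro h; exact s4
    | succ j ih =>
      intro h
      exact step (hp (4 + 2 * j) (by omega) (by omega)) (ih (by omega))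
  have all : ∀ x : Fin (k + 1), π.SameCycle ⟨0, by omega⟩ x := by
    rintro ⟨x, hx⟩
    rcases (by omega : x = 0 ∨ x = 1 ∨ x = 2 ∨ x = 3 ∨ 4 ≤ x) with h | h | h | h | h
    · subst h; exact s0
    · subst h; exact s1
    · subst h; exact s2
    · subst h; exact s3
    · rcases Nat.even_or_odd' x with ⟨c, hc | hc⟩
      · obtain ⟨j, rfl⟩ : ∃ j, x = 4 + 2 * j := ⟨c - 2, by omega⟩
        exact seven j hx
      · obtain ⟨j, rfl⟩ : ∃ j, x = 5 + 2 * j := ⟨c - 2, by omega⟩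
        exact sodd j hx
  have hne : π ⟨0, by omega⟩ ≠ ⟨0, by omega⟩ := by
    rw [h0]
    simp
  refine ⟨⟨_, hne, fun y _ => all y⟩, ?_⟩
  ext x
  simp only [Equiv.Perm.mem_support, Finset.mem_univ, iff_true]
  exact fun h => hne ((all x).apply_eq_self_iff.mpr h)
end

section
/- Let k ≥ 6 be even and let π be the position permutation of Fin (k+1) defined by π(0) = 1, π(1) = 2, π(2) = 5, π(3) = 4, π(p) = p+2 for 4 ≤ p ≤ k−2, π(k−1) = 3, π(k) = 0. Let A₀ : Fin (k+1) → Fin (k+1) be the arrangement with A₀(0) = 0, A₀(1) = 2, A₀(2) = 5, A₀(3) = 4, A₀(j) = j+2 for 4 ≤ j ≤ k−2, A₀(k−1) = 3 and A₀(k) = 1 (i.e., (0,2,5,4,6,7,…,k,3,1)). Then A₀ ∘ π^k is the arrangement (1,0,2,3,…,k), i.e., (A₀ ∘ π^k)(0) = 1, (A₀ ∘ π^k)(1) = 0, and (A₀ ∘ π^k)(p) = p for 2 ≤ p ≤ k. -/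
/-- For even `k ≥ 6`, let `π` be the position permutation of `Fin (k+1)` with `π 0 = 1`,
`π 1 = 2`, `π 2 = 5`, `π 3 = 4`, `π p = p + 2` for `4 ≤ p ≤ k - 2`, `π (k-1) = 3`,
`π k = 0`, and let `A₀` be the arrangement `(0,2,5,4,6,7,…,k,3,1)`.  Then `A₀ ∘ π^k` is
the arrangement `(1,0,2,3,…,k)`. -/
theorem backward_iteration (k : ℕ) (hk : 6 ≤ k) (hke : Even k)
    (π : Equiv.Perm (Fin (k + 1)))
    (h0 : π ⟨0, by omega⟩ = ⟨1, by omega⟩)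
    (h1 : π ⟨1, by omega⟩ = ⟨2, by omega⟩)
    (h2 : π ⟨2, by omega⟩ = ⟨5, by omega⟩)
    (h3 : π ⟨3, by omega⟩ = ⟨4, by omega⟩)
    (hp : ∀ p : ℕ, ∀ _h4 : 4 ≤ p, ∀ _hp : p ≤ k - 2,
      π ⟨p, by omega⟩ = ⟨p + 2, by omega⟩)
    (hk1 : π ⟨k - 1, by omega⟩ = ⟨3, by omega⟩)
    (hkk : π ⟨k, by omega⟩ = ⟨0, by omega⟩)
    (A₀ : Equiv.Perm (Fin (k + 1)))
    (hA0 : A₀ ⟨0, by omega⟩ = ⟨0, by omega⟩)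
    (hA1 : A₀ ⟨1, by omega⟩ = ⟨2, by omega⟩)
    (hA2 : A₀ ⟨2, by omega⟩ = ⟨5, by omega⟩)
    (hA3 : A₀ ⟨3, by omega⟩ = ⟨4, by omega⟩)
    (hAj : ∀ j : ℕ, ∀ _h4 : 4 ≤ j, ∀ _hj : j ≤ k - 2,
      A₀ ⟨j, by omega⟩ = ⟨j + 2, by omega⟩)
    (hAk1 : A₀ ⟨k - 1, by omega⟩ = ⟨3, by omega⟩)
    (hAk : A₀ ⟨k, by omega⟩ = ⟨1, by omega⟩) :
    A₀ ((π ^ k) ⟨0, by omega⟩) = ⟨1, by omega⟩ ∧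
    A₀ ((π ^ k) ⟨1, by omega⟩) = ⟨0, by omega⟩ ∧
    (∀ p : ℕ, ∀ _h2 : 2 ≤ p, ∀ _hp : p ≤ k,
      A₀ ((π ^ k) ⟨p, by omega⟩) = ⟨p, by omega⟩) := by
  obtain ⟨r, hr⟩ := hke
  have step : ∀ (i : ℕ) (x y z : Fin (k + 1)), (π ^ i) x = y → π y = z → (π ^ (i + 1)) x = z := by
    intro i x y z hxy hyz
    rw [pow_succ', Equiv.Perm.mul_apply, hxy, hyz]
  have e0 : (π ^ 0) (⟨0, by omega⟩ : Fin (k + 1)) = ⟨0, by omega⟩ := by simp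
  have e1 := step _ _ _ _ e0 h0
  have e2 := step _ _ _ _ e1 h1
  have e3 := step _ _ _ _ e2 h2
  have odd : ∀ m : ℕ, ∀ hm : 5 + 2 * m ≤ k - 1,
      (π ^ (m + 3)) (⟨0, by omega⟩ : Fin (k + 1)) = ⟨5 + 2 * m, by omega⟩ := by
    intro m
    induction m with
    | zero => intro _; exact e3
    | succ m ih =>
      intro hm
      have h := step _ _ _ _ (ih (by omega)) (hp (5 + 2 * m) (by omega) (by omega))
      rw [show m + 1 + 3 = m + 3 + 1 by omega, h]
      apply Fin.ext
      simp only
      omega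
  have er : (π ^ r) (⟨0, by omega⟩ : Fin (k + 1)) = ⟨k - 1, by omega⟩ := by
    have h := odd (r - 3) (by omega)
    rw [show r - 3 + 3 = r by omega] at h
    rw [h]
    apply Fin.ext
    simp only
    omega
  have er1 := step _ _ _ _ er hk1
  have er2 := step _ _ _ _ er1 h3
  have even : ∀ m : ℕ, ∀ hm : 4 + 2 * m ≤ k,
      (π ^ (r + 1 + 1 + m)) (⟨0, by omega⟩ : Fin (k + 1)) = ⟨4 + 2 * m, by omega⟩ := by
    intro m
    induction m with
    | zero => intro _; exact er2
    | succ m ih =>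
      intro hm
      have h := step _ _ _ _ (ih (by omega)) (hp (4 + 2 * m) (by omega) (by omega))
      rw [show r + 1 + 1 + (m + 1) = r + 1 + 1 + m + 1 by omega, h]
      apply Fin.ext
      simp only
      omega
  have ek : (π ^ k) (⟨0, by omega⟩ : Fin (k + 1)) = ⟨k, by omega⟩ := by
    have h := even (r - 2) (by omega)
    rw [show r + 1 + 1 + (r - 2) = k by omega] at h
    rw [h]
    apply Fin.ext
    simp only
    omega
  have ek1 := step _ _ _ _ ek hkk
  have orb : ∀ x : Fin (k + 1), ∃ i : ℕ, (π ^ i) (⟨0, by omega⟩ : Fin (k + 1)) = x := by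
    rintro ⟨x, hx⟩
    by_cases c : x < 4
    · interval_cases x
      · exact ⟨_, e0⟩
      · exact ⟨_, e1⟩
      · exact ⟨_, e2⟩
      · exact ⟨_, er1⟩
    · rcases Nat.even_or_odd' x with ⟨m, h | h⟩
      · refine ⟨_, (even (m - 2) (by omega)).trans ?_⟩
        apply Fin.ext
        simp only
        omega
      · refine ⟨_, (odd (m - 2) (by omega)).trans ?_⟩
        apply Fin.ext
        simp only
        omega
  have key : ∀ x y : Fin (k + 1), π x = y → (π ^ k) y = x := by
    intro x y hxy
    obtain ⟨i, hi⟩ := orb x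
    rw [← hxy, ← Equiv.Perm.mul_apply, ← pow_succ, ← hi, ← Equiv.Perm.mul_apply,
      (Commute.pow_pow_self π (k + 1) i).eq, Equiv.Perm.mul_apply, ek1]
  refine ⟨?_, ?_, ?_⟩
  · rw [key _ _ hkk, hAk]
  · rw [key _ _ h0, hA0]
  · intro p hp2 hpk
    by_cases c2 : p = 2
    · subst c2; rw [key _ _ h1, hA1]
    by_cases c3 : p = 3
    · subst c3; rw [key _ _ hk1, hAk1]
    by_cases c4 : p = 4
    · subst c4; rw [key _ _ h3, hA3]
    by_cases c5 : p = 5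
    · subst c5; rw [key _ _ h2, hA2]
    obtain ⟨q, rfl⟩ : ∃ q, p = q + 2 := ⟨p - 2, by omega⟩
    rw [key _ _ (hp q (by omega) (by omega)), hAj q (by omega) (by omega)]
end

section
/- Let k ≥ 6 be even, let π be the position permutation of Fin (k+1) defined by π(0) = 1, π(1) = 2, π(2) = 5, π(3) = 4, π(p) = p+2 for 4 ≤ p ≤ k−2, π(k−1) = 3, π(k) = 0, and let A₀ : Fin (k+1) → Fin (k+1) be the arrangement (0,2,5,4,6,7,…,k,3,1), i.e., A₀(0) = 0, A₀(1) = 2, A₀(2) = 5, A₀(3) = 4, A₀(j) = j+2 for 4 ≤ j ≤ k−2, A₀(k−1) = 3, A₀(k) = 1. Then the first entries (A₀ ∘ π^j)(0) for j = 0, 1, …, k are pairwise distinct; equivalently they exhaust all of Fin (k+1). -/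
/-- For even `k ≥ 6`, let `π` be the position permutation of `Fin (k+1)` with `π 0 = 1`,
`π 1 = 2`, `π 2 = 5`, `π 3 = 4`, `π p = p + 2` for `4 ≤ p ≤ k - 2`, `π (k-1) = 3`,
`π k = 0`, and let `A₀` be the arrangement `(0,2,5,4,6,7,…,k,3,1)`.  Then the first
entries `(A₀ ∘ π^j) 0` for `j = 0, 1, …, k` are pairwise distinct; equivalently, they
exhaust all of `Fin (k+1)`. -/
theorem first_entries_distinct_even (k : ℕ) (hk : 6 ≤ k) (hke : Even k)
    (π : Equiv.Perm (Fin (k + 1)))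
    (h0 : π ⟨0, by omega⟩ = ⟨1, by omega⟩)
    (h1 : π ⟨1, by omega⟩ = ⟨2, by omega⟩)
    (h2 : π ⟨2, by omega⟩ = ⟨5, by omega⟩)
    (h3 : π ⟨3, by omega⟩ = ⟨4, by omega⟩)
    (hp : ∀ p : ℕ, ∀ _h4 : 4 ≤ p, ∀ _hp : p ≤ k - 2,
      π ⟨p, by omega⟩ = ⟨p + 2, by omega⟩)
    (hk1 : π ⟨k - 1, by omega⟩ = ⟨3, by omega⟩)
    (hkk : π ⟨k, by omega⟩ = ⟨0, by omega⟩)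
    (A₀ : Equiv.Perm (Fin (k + 1)))
    (hA0 : A₀ ⟨0, by omega⟩ = ⟨0, by omega⟩)
    (hA1 : A₀ ⟨1, by omega⟩ = ⟨2, by omega⟩)
    (hA2 : A₀ ⟨2, by omega⟩ = ⟨5, by omega⟩)
    (hA3 : A₀ ⟨3, by omega⟩ = ⟨4, by omega⟩)
    (hAj : ∀ j : ℕ, ∀ _h4 : 4 ≤ j, ∀ _hj : j ≤ k - 2,
      A₀ ⟨j, by omega⟩ = ⟨j + 2, by omega⟩)
    (hAk1 : A₀ ⟨k - 1, by omega⟩ = ⟨3, by omega⟩)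
    (hAk : A₀ ⟨k, by omega⟩ = ⟨1, by omega⟩) :
    (∀ j₁ j₂ : ℕ, j₁ ≤ k → j₂ ≤ k →
      A₀ ((π ^ j₁) ⟨0, by omega⟩) = A₀ ((π ^ j₂) ⟨0, by omega⟩) → j₁ = j₂) ∧
    (∀ v : Fin (k + 1), ∃ j : ℕ, j ≤ k ∧ A₀ ((π ^ j) ⟨0, by omega⟩) = v) := by
  obtain ⟨m, hm⟩ := hke
  have key : ∀ j : ℕ, j ≤ k → ((π ^ j) ⟨0, by omega⟩).val =
      (if j ≤ 2 then j else if j ≤ m then 2 * j - 1 else if j = m + 1 then 3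
        else 2 * (j - m)) := by
    intro j
    induction j with
    | zero => intro _; simp
    | succ j ih =>
      intro hj
      have ih := ih (by omega)
      rw [pow_succ', Equiv.Perm.mul_apply]
      generalize (π ^ j) ⟨0, by omega⟩ = x at ih
      obtain ⟨x, hx⟩ := x
      simp only at ih
      by_cases c0 : j = 0
      · have e : x = 0 := by split_ifs at ih <;> omega
        subst e; rw [h0]; subst c0; simp
      by_cases c1 : j = 1
      · have e : x = 1 := by split_ifs at ih <;> omega
        subst e; rw [h1]; subst c1; simp
      by_cases c2 : j = 2
      · have e : x = 2 := by split_ifs at ih <;> omega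
        subst e; rw [h2]; simp only; split_ifs <;> omega
      by_cases c3 : j = m
      · have e : x = k - 1 := by split_ifs at ih <;> omega
        subst e; rw [hk1]; simp only; split_ifs <;> omega
      by_cases c4 : j = m + 1
      · have e : x = 3 := by split_ifs at ih <;> omega
        subst e; rw [h3]; simp only; split_ifs <;> omega
      have e : 4 ≤ x ∧ x ≤ k - 2 := by split_ifs at ih <;> omega
      rw [hp x e.1 e.2]; simp only
      split_ifs at ih ⊢ <;> omega
  constructor
  · intro a b ha hb h
    have h := congrArg Fin.val (A₀.injective h)
    rw [key a ha, key b hb] at h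
    split_ifs at h <;> omega
  · intro v
    obtain ⟨⟨w, hw⟩, rfl⟩ := A₀.surjective v
    have : ∃ j : ℕ, j ≤ k ∧ (if j ≤ 2 then j else if j ≤ m then 2 * j - 1
        else if j = m + 1 then 3 else 2 * (j - m)) = w := by
      by_cases c : w ≤ 2
      · exact ⟨w, by omega, by simp [c]⟩
      by_cases c3 : w = 3
      · exact ⟨m + 1, by omega, by split_ifs <;> omega⟩
      rcases Nat.even_or_odd' w with ⟨t, ht | ht⟩
      · exact ⟨m + t, by omega, by split_ifs <;> omega⟩
      · exact ⟨t + 1, by omega, by split_ifs <;> omega⟩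
    obtain ⟨j, hj, e⟩ := this
    refine ⟨j, hj, congrArg A₀ (Fin.ext ?_)⟩
    rw [key j hj, e]
end

section
/- Let n ≥ 1, let σ be a bijection of Fin n, and let i ≤ j < n. Let c_{i,j} be the permutation of Fin n with c_{i,j}(i) = j, c_{i,j}(p) = p−1 for i < p ≤ j, and c_{i,j}(p) = p otherwise (extracting the entry at position j and inserting it at position i). Then the Kendall tau distance between σ and σ ∘ c_{i,j} equals j − i. -/
/-- The Kendall tau distance between two arrangements `σ τ : Fin n ≃ Fin n`
(where `σ j` is the entry at position `j`): the number of pairs of positions `p < q`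
whose entries occur in the opposite relative order in the two arrangements, i.e. the
number of inversions of `σ⁻¹ ∘ τ`. -/
def kendall {n : ℕ} (σ τ : Equiv.Perm (Fin n)) : ℕ :=
  ((Finset.univ : Finset (Fin n × Fin n)).filter
    (fun pq => pq.1 < pq.2 ∧ σ.symm (τ pq.2) < σ.symm (τ pq.1))).card

/-- If `τ = σ ∘ c_{i,j}` where `c_{i,j}` (for positions `i ≤ j`) extracts the entry at
position `j` and inserts it at position `i` (that is, `c_{i,j} i = j`, `c_{i,j} p = p - 1`
for `i < p ≤ j`, and `c_{i,j} p = p` otherwise), then the Kendall tau distance between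
`σ` and `τ` equals `j - i`. -/
theorem kendall_extract_insert (n : ℕ) (hn : 1 ≤ n) (σ τ : Equiv.Perm (Fin n))
    (i j : Fin n) (hij : i ≤ j) (c : Fin n → Fin n)
    (hci : c i = j)
    (hc1 : ∀ p : Fin n, i < p → p ≤ j → (c p : ℕ) = (p : ℕ) - 1)
    (hc2 : ∀ p : Fin n, p < i ∨ j < p → c p = p)
    (hτ : ∀ p : Fin n, τ p = σ (c p)) :
    kendall σ τ = (j : ℕ) - (i : ℕ) := by
  have hset : (Finset.univ : Finset (Fin n × Fin n)).filter
      (fun pq => pq.1 < pq.2 ∧ σ.symm (τ pq.2) < σ.symm (τ pq.1))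
      = (Finset.Ioc i j).image (fun q => (i, q)) := by
    ext ⟨p, q⟩
    simp only [Finset.mem_filter, Finset.mem_univ, true_and, hτ, Equiv.symm_apply_apply,
      Finset.mem_image, Finset.mem_Ioc, Prod.mk.injEq]
    have key : ∀ p : Fin n, (p = i ∧ (c p : ℕ) = j) ∨ (i < p ∧ p ≤ j ∧ (c p : ℕ) = (p : ℕ) - 1) ∨
        ((p < i ∨ j < p) ∧ (c p : ℕ) = p) := by
      intro p
      rcases lt_trichotomy p i with h | h | h
      · exact Or.inr (Or.inr ⟨Or.inl h, by rw [hc2 p (Or.inl h)]⟩)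
      · exact Or.inl ⟨h, by rw [h, hci]⟩
      · rcases le_or_gt p j with h' | h'
        · exact Or.inr (Or.inl ⟨h, h', hc1 p h h'⟩)
        · exact Or.inr (Or.inr ⟨Or.inr h', by rw [hc2 p (Or.inr h')]⟩)
    have hp := key p
    have hq := key q
    have e : (∃ a, (i < a ∧ a ≤ j) ∧ i = p ∧ a = q) ↔ ((i < q ∧ q ≤ j) ∧ i = p) := by
      constructor
      · rintro ⟨a, h, h1, rfl⟩; exact ⟨h, h1⟩
      · rintro ⟨h, h1⟩; exact ⟨q, h, h1, rfl⟩
    rw [e]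
    clear e key hc1 hc2 hτ hci
    simp only [Fin.lt_def, Fin.le_def, Fin.ext_iff] at *
    omega
  unfold kendall
  rw [hset, Finset.card_image_of_injective _ (fun a b h => (Prod.mk.inj h).2), Fin.card_Ioc]
end

section
/- Define D : ℕ → ℤ by D(1) = 0 and, for k ≥ 2, D(k) = k·D(k−1) + (k−3)·(k−1) + 2 if k is even and D(k) = k·D(k−1) + (k−1) if k is odd. Then the sequence of real numbers D(k)/(k! − 1) converges, as k → ∞, to 7·cosh(1) − 4·sinh(1) − 5. -/
def D : ℕ → ℤ
  | 0 => 0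
  | 1 => 0
  | k + 2 =>
      if Even (k + 2) then
        ((k : ℤ) + 2) * D (k + 1) + (((k : ℤ) + 2) - 3) * (((k : ℤ) + 2) - 1) + 2
      else
        ((k : ℤ) + 2) * D (k + 1) + (((k : ℤ) + 2) - 1)

theorem aux_hasC : HasSum (fun j : ℕ => if Even j then (1:ℝ) / (j.factorial : ℝ) else 0) (Real.cosh 1) := by
  have h := HasSum.even_add_odd (f := fun j : ℕ => if Even j then (1:ℝ) / (j.factorial : ℝ) else 0)
    (m := Real.cosh 1) (m' := 0) (by simpa using Real.hasSum_cosh 1)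
    (by simpa using (hasSum_zero : HasSum (fun _ : ℕ => (0:ℝ)) 0))
  simpa using h

theorem aux_hasS : HasSum (fun j : ℕ => if Even j then 0 else (1:ℝ) / (j.factorial : ℝ)) (Real.sinh 1) := by
  have h := HasSum.even_add_odd (f := fun j : ℕ => if Even j then 0 else (1:ℝ) / (j.factorial : ℝ))
    (m := 0) (m' := Real.sinh 1) (by simpa using (hasSum_zero : HasSum (fun _ : ℕ => (0:ℝ)) 0))
    (by simpa using Real.hasSum_sinh 1)
  simpa using h

noncomputable def auxC (k : ℕ) : ℝ := ∑ j ∈ Finset.range k, if Even j then (1:ℝ) / (j.factorial : ℝ) else 0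
noncomputable def auxS (k : ℕ) : ℝ := ∑ j ∈ Finset.range k, if Even j then 0 else (1:ℝ) / (j.factorial : ℝ)

theorem auxC_succ (k : ℕ) : auxC (k+1) = auxC k + if Even k then (1:ℝ) / (k.factorial : ℝ) else 0 :=
  Finset.sum_range_succ _ _
theorem auxS_succ (k : ℕ) : auxS (k+1) = auxS k + if Even k then 0 else (1:ℝ) / (k.factorial : ℝ) :=
  Finset.sum_range_succ _ _

theorem aux_D (k : ℕ) : (D (k+1) : ℝ) / ((k+1).factorial : ℝ) =
    auxC k - 3 * auxS (k+1) + 5 * auxC (k+2) - 5 + auxC (k+1) - auxS (k+2) := by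
  induction k with
  | zero => simp [D, auxC, auxS, Finset.sum_range_succ]
  | succ k ih =>
    have hk : (k.factorial : ℝ) ≠ 0 := by positivity
    have h1 : (k : ℝ) + 1 ≠ 0 := by positivity
    have h2 : (k : ℝ) + 2 ≠ 0 := by positivity
    have f1 : ((k+1).factorial : ℝ) = (k+1) * k.factorial := by
      rw [Nat.factorial_succ]; push_cast; ring
    have f2 : ((k+2).factorial : ℝ) = (k+2) * ((k+1) * k.factorial) := by
      rw [Nat.factorial_succ, Nat.factorial_succ]; push_cast; ring
    have key : (D (k+2) : ℝ) / ((k+2).factorial : ℝ) = (D (k+1) : ℝ) / ((k+1).factorial : ℝ) +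
        (if Even k then ((k:ℝ)-1)*(k+1)+2 else (k:ℝ)+1) / ((k+2).factorial : ℝ) := by
      rw [f1, f2, D]
      by_cases he : Even k
      · have : Even (k+2) := by grind
        simp only [he, this, if_true]; push_cast; field_simp; ring
      · have : ¬ Even (k+2) := by grind
        simp only [he, this, if_false]; push_cast; field_simp; ring
    rw [show k+1+1 = k+2 from rfl, show k+1+2 = k+2+1 from rfl, key, ih, auxC_succ (k+2), auxS_succ (k+2),
      show auxS (k+2) = _ from auxS_succ (k+1), show auxC (k+2) = _ from auxC_succ (k+1), auxC_succ k, f1, f2]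
    by_cases he : Even k
    · have a : Even (k+2) := by grind
      have b : ¬ Even (k+1) := by grind
      simp only [he, a, b, if_true, if_false]; field_simp; ring
    · have a : ¬ Even (k+2) := by grind
      have b : Even (k+1) := by grind
      simp only [he, a, b, if_true, if_false]; field_simp; ring

/-- `D k / (k! - 1)` converges to `7·cosh(1) - 4·sinh(1) - 5` as `k → ∞`. -/
theorem tendsto_average_kendall :
    Filter.Tendsto (fun k : ℕ => (D k : ℝ) / ((k.factorial : ℝ) - 1))
      Filter.atTop (nhds (7 * Real.cosh 1 - 4 * Real.sinh 1 - 5)) := by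
  have hC : Filter.Tendsto auxC Filter.atTop (nhds (Real.cosh 1)) := aux_hasC.tendsto_sum_nat
  have hS : Filter.Tendsto auxS Filter.atTop (nhds (Real.sinh 1)) := aux_hasS.tendsto_sum_nat
  have s (f : ℕ → ℝ) (a : ℝ) (n : ℕ) (h : Filter.Tendsto f Filter.atTop (nhds a)) :
      Filter.Tendsto (fun k => f (k+n)) Filter.atTop (nhds a) :=
    (Filter.tendsto_add_atTop_iff_nat n).2 h
  have hE : Filter.Tendsto (fun k : ℕ => (D (k+1) : ℝ) / ((k+1).factorial : ℝ)) Filter.atTop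
      (nhds (7 * Real.cosh 1 - 4 * Real.sinh 1 - 5)) := by
    simp only [aux_D]
    have := ((((hC.sub ((s _ _ 1 hS).const_mul 3)).add ((s _ _ 2 hC).const_mul 5)).sub_const 5).add
      (s _ _ 1 hC)).sub (s _ _ 2 hS)
    convert this using 2
    ring
  have hE' := (Filter.tendsto_add_atTop_iff_nat (f := fun k : ℕ => (D k : ℝ) / (k.factorial : ℝ)) 1).1 hE
  have hI : Filter.Tendsto (fun k : ℕ => 1 / (k.factorial : ℝ)) Filter.atTop (nhds 0) := by
    simpa using FloorSemiring.tendsto_pow_div_factorial_atTop (1:ℝ)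
  have hq := hE'.div (hI.const_sub 1) (by norm_num)
  simp only [sub_zero, div_one] at hq
  refine hq.congr fun k => ?_
  have hk : (k.factorial : ℝ) ≠ 0 := by positivity
  simp only [Pi.div_apply]
  rw [div_div, mul_sub, mul_one, mul_one_div_cancel hk]
end

section
/- For n ≥ 2, order the n! arrangements of Fin n lexicographically (σ < τ iff at the first position p where they differ, σ(p) < τ(p)), and let S(n) be the sum of the Kendall tau distances between consecutive arrangements in this lexicographic order. Then S(n)/(n! − 1) converges to 2 as n → ∞. -/
/-- The lexicographic (strict) order on arrangements: `σ < τ` iff at the first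
position where they differ, the entry of `σ` is smaller than that of `τ`. -/
def lexLT {n : ℕ} (σ τ : Equiv.Perm (Fin n)) : Prop :=
  ∃ p : Fin n, σ p < τ p ∧ ∀ q : Fin n, q < p → σ q = τ q

instance {n : ℕ} (σ τ : Equiv.Perm (Fin n)) : Decidable (lexLT σ τ) :=
  inferInstanceAs (Decidable (∃ p : Fin n, σ p < τ p ∧ ∀ q : Fin n, q < p → σ q = τ q))

/-- `S n`: the sum of the Kendall tau distances between consecutive arrangements of
`Fin n` in lexicographic order, expressed as the sum, over all pairs `(σ, τ)` where `τ`
is the immediate lexicographic successor of `σ`, of the distance `kendall σ τ`. -/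
def S (n : ℕ) : ℕ :=
  ∑ σ : Equiv.Perm (Fin n), ∑ τ : Equiv.Perm (Fin n),
    if lexLT σ τ ∧ ∀ ρ : Equiv.Perm (Fin n), lexLT σ ρ → ¬ lexLT ρ τ then kendall σ τ
    else 0

def kxt {n : ℕ} (a : Fin (n+1)) (σ : Equiv.Perm (Fin n)) : Equiv.Perm (Fin (n+1)) :=
  ((finSuccEquiv' 0).trans (Equiv.optionCongr σ)).trans (finSuccEquiv' a).symm

theorem kxt_zero {n : ℕ} (a : Fin (n+1)) (σ : Equiv.Perm (Fin n)) : kxt a σ 0 = a := by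
  simp [kxt]

theorem kxt_succ {n : ℕ} (a : Fin (n+1)) (σ : Equiv.Perm (Fin n)) (i : Fin n) :
    kxt a σ i.succ = a.succAbove (σ i) := by
  have : finSuccEquiv' (0 : Fin (n+1)) i.succ = some i := by
    rw [← Fin.succAbove_zero, finSuccEquiv'_succAbove]
  simp [kxt, this]

theorem kxt_symm_self {n : ℕ} (a : Fin (n+1)) (σ : Equiv.Perm (Fin n)) : (kxt a σ).symm a = 0 := by
  rw [Equiv.symm_apply_eq, kxt_zero]

theorem kxt_symm_succAbove {n : ℕ} (a : Fin (n+1)) (σ : Equiv.Perm (Fin n)) (i : Fin n) :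
    (kxt a σ).symm (a.succAbove i) = (σ.symm i).succ := by
  rw [Equiv.symm_apply_eq, kxt_succ]; simp

theorem kxt_bij (n : ℕ) :
    Function.Bijective (fun x : Fin (n+1) × Equiv.Perm (Fin n) => kxt x.1 x.2) := by
  rw [Fintype.bijective_iff_injective_and_card]
  constructor
  · rintro ⟨a, σ⟩ ⟨b, τ⟩ h
    simp only at h
    have h0 : a = b := by rw [← kxt_zero a σ, h, kxt_zero]
    subst h0
    congr 1
    ext i : 1
    have := congrArg (fun f => f i.succ) h
    simpa [kxt_succ] using this
  · simp [Fintype.card_perm, Nat.factorial_succ]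

theorem lexLT_kxt {n : ℕ} (a b : Fin (n+1)) (σ τ : Equiv.Perm (Fin n)) :
    lexLT (kxt a σ) (kxt b τ) ↔ a < b ∨ (a = b ∧ lexLT σ τ) := by
  constructor
  · rintro ⟨p, hp, hq⟩
    induction p using Fin.cases with
    | zero => left; simpa [kxt_zero] using hp
    | succ p =>
      right
      have h0 : a = b := by simpa [kxt_zero] using hq 0 (Fin.succ_pos p)
      subst h0
      refine ⟨rfl, p, ?_, fun q hqp => ?_⟩
      · simpa [kxt_succ] using hp
      · simpa [kxt_succ] using hq q.succ (Fin.succ_lt_succ_iff.2 hqp)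
  · rintro (h | ⟨rfl, p, hp, hq⟩)
    · exact ⟨0, by simpa [kxt_zero] using h, fun q hq => absurd hq (Fin.not_lt_zero q)⟩
    · refine ⟨p.succ, by simpa [kxt_succ] using hp, fun q hqp => ?_⟩
      induction q using Fin.cases with
      | zero => simp [kxt_zero]
      | succ q => 
        rw [kxt_succ, kxt_succ, hq q (Fin.succ_lt_succ_iff.1 hqp)]

theorem lexLT_total {n : ℕ} {σ τ : Equiv.Perm (Fin n)} (h : σ ≠ τ) : lexLT σ τ ∨ lexLT τ σ := by
  have hne : ∃ p, σ p ≠ τ p := by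
    by_contra! hc
    exact h (Equiv.ext hc)
  obtain ⟨p, hp, hmin⟩ := WellFounded.has_min (wellFounded_lt (α := Fin n)) {p | σ p ≠ τ p} hne
  have hq : ∀ q, q < p → σ q = τ q := by
    intro q hq
    by_contra hc
    exact hmin q hc hq
  rcases lt_or_gt_of_ne hp with h1 | h1
  · exact Or.inl ⟨p, h1, hq⟩
  · exact Or.inr ⟨p, h1, fun q h => (hq q h).symm⟩

theorem not_lexLT_one {n : ℕ} (τ : Equiv.Perm (Fin n)) : ¬ lexLT τ 1 := by
  rintro ⟨p, hp, hq⟩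
  have h1 := hq (τ p) hp
  have h2 := τ.injective h1
  simp only [Equiv.Perm.one_apply] at hp
  exact absurd h2 (ne_of_lt hp)

theorem not_rev_lexLT {n : ℕ} (τ : Equiv.Perm (Fin n)) : ¬ lexLT Fin.revPerm τ := by
  rintro ⟨p, hp, hq⟩
  simp only [Fin.revPerm_apply] at hp hq
  have h0 : Fin.rev (τ p) < p := by
    rw [← Fin.rev_lt_rev]; simpa using hp
  have h1 := hq _ h0
  rw [Fin.rev_rev] at h1
  have h2 := τ.injective h1
  exact absurd h2.symm (ne_of_lt h0)

theorem one_lexLT {n : ℕ} {τ : Equiv.Perm (Fin n)} (h : τ ≠ 1) : lexLT 1 τ :=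
  (lexLT_total h).resolve_left (not_lexLT_one τ)

theorem lexLT_rev {n : ℕ} {τ : Equiv.Perm (Fin n)} (h : τ ≠ Fin.revPerm) : lexLT τ Fin.revPerm :=
  (lexLT_total h).resolve_right (not_rev_lexLT τ)

theorem lexLT_irrefl {n : ℕ} (τ : Equiv.Perm (Fin n)) : ¬ lexLT τ τ := by
  rintro ⟨p, hp, _⟩
  exact lt_irrefl _ hp

theorem cov_kxt {n : ℕ} (a b : Fin (n+1)) (σ τ : Equiv.Perm (Fin n)) :
    (lexLT (kxt a σ) (kxt b τ) ∧
      ∀ ρ : Equiv.Perm (Fin (n+1)), lexLT (kxt a σ) ρ → ¬ lexLT ρ (kxt b τ)) ↔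
    ((a = b ∧ (lexLT σ τ ∧ ∀ ρ : Equiv.Perm (Fin n), lexLT σ ρ → ¬ lexLT ρ τ)) ∨
      (a.val + 1 = b.val ∧ σ = Fin.revPerm ∧ τ = 1)) := by
  have key : (∀ ρ : Equiv.Perm (Fin (n+1)), lexLT (kxt a σ) ρ → ¬ lexLT ρ (kxt b τ)) ↔
      ∀ c (ρ : Equiv.Perm (Fin n)), (a < c ∨ (a = c ∧ lexLT σ ρ)) →
        ¬ (c < b ∨ (c = b ∧ lexLT ρ τ)) := by
    constructor
    · intro h c ρ
      rw [← lexLT_kxt, ← lexLT_kxt]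
      exact h _
    · intro h ρ
      obtain ⟨⟨c, ρ⟩, rfl⟩ := (kxt_bij n).2 ρ
      simp only [lexLT_kxt]
      exact h _ _
  rw [key, lexLT_kxt]
  constructor
  · rintro ⟨hab | ⟨rfl, hl⟩, h⟩
    · right
      refine ⟨?_, ?_, ?_⟩
      · by_contra hc
        have : a.val < b.val := hab
        refine h ⟨a.val + 1, by omega⟩ 1 (Or.inl ?_) (Or.inl ?_)
        · rw [Fin.lt_def]; simp
        · rw [Fin.lt_def]; simp only; omega
      · by_contra hc
        exact h a Fin.revPerm (Or.inr ⟨rfl, lexLT_rev hc⟩) (Or.inl hab)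
      · by_contra hc
        exact h b 1 (Or.inl hab) (Or.inr ⟨rfl, one_lexLT hc⟩)
    · left
      exact ⟨rfl, hl, fun ρ h1 h2 => h a ρ (Or.inr ⟨rfl, h1⟩) (Or.inr ⟨rfl, h2⟩)⟩
  · rintro (⟨rfl, hl, h⟩ | ⟨hab, rfl, rfl⟩)
    · refine ⟨Or.inr ⟨rfl, hl⟩, ?_⟩
      rintro c ρ (h1 | ⟨rfl, h1⟩) (h2 | ⟨h3, h2⟩)
      · exact lt_asymm h1 h2
      · exact absurd h3.symm (ne_of_lt h1)
      · exact lt_irrefl _ h2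
      · exact h ρ h1 h2
    · refine ⟨Or.inl (by rw [Fin.lt_def]; omega), ?_⟩
      rintro c ρ (h1 | ⟨rfl, h1⟩) (h2 | ⟨h3, h2⟩)
      · rw [Fin.lt_def] at h1 h2; omega
      · exact not_lexLT_one _ h2
      · exact not_rev_lexLT _ h1
      · exact not_rev_lexLT _ h1

theorem kendall_eq_sum {n : ℕ} (σ τ : Equiv.Perm (Fin n)) :
    kendall σ τ = ∑ p : Fin n, ∑ q : Fin n,
      if p < q ∧ σ.symm (τ q) < σ.symm (τ p) then 1 else 0 := by
  rw [kendall, Finset.card_filter, Fintype.sum_prod_type]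

theorem kendall_kxt_same {n : ℕ} (a : Fin (n+1)) (σ τ : Equiv.Perm (Fin n)) :
    kendall (kxt a σ) (kxt a τ) = kendall σ τ := by
  rw [kendall_eq_sum, kendall_eq_sum]
  simp only [Fin.sum_univ_succ, kxt_zero, kxt_succ, kxt_symm_self, kxt_symm_succAbove,
    Fin.succ_lt_succ_iff, Fin.not_lt_zero]
  simp

theorem sum_pairs (n : ℕ) :
    (∑ i : Fin n, ∑ j : Fin n, if i < j then 1 else 0) = n.choose 2 := by
  induction n with
  | zero => simp
  | succ n ih =>
    simp only [Fin.sum_univ_succ, Fin.succ_lt_succ_iff, Fin.not_lt_zero, Fin.succ_pos]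
    simp [Nat.choose_succ_succ]
    simp at ih
    convert ih

theorem kendall_kxt_step {n : ℕ} (a : Fin n) :
    kendall (kxt a.castSucc Fin.revPerm) (kxt a.succ 1) = n.choose 2 + 1 := by
  have h0 : (kxt a.castSucc Fin.revPerm).symm (kxt a.succ 1 0) = (Fin.rev a).succ := by
    rw [kxt_zero, ← Fin.succAbove_castSucc_self, kxt_symm_succAbove]; simp
  have h1 : ∀ i : Fin n, (kxt a.castSucc Fin.revPerm).symm (kxt a.succ 1 i.succ) =
      if i = a then 0 else (Fin.rev i).succ := by
    intro i
    rw [kxt_succ]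
    split_ifs with h
    · subst h
      simp only [Equiv.Perm.one_apply, Fin.succAbove_succ_self]
      rw [kxt_symm_self]
    · have : a.succ.succAbove i = a.castSucc.succAbove i := by
        have : i.val ≠ a.val := fun hc => h (Fin.ext hc)
        ext
        simp only [Fin.succAbove, Fin.lt_def]
        split_ifs <;> simp_all <;> omega
      simp only [Equiv.Perm.one_apply]
      rw [this, kxt_symm_succAbove]; simp
  rw [kendall_eq_sum, ← sum_pairs]
  simp only [Fin.sum_univ_succ, h0, h1, Fin.succ_lt_succ_iff, Fin.not_lt_zero, Fin.succ_pos]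
  have hA : ∀ j : Fin n, (if True ∧ (if j = a then 0 else (Fin.rev j).succ) < (Fin.rev a).succ
      then 1 else 0 : ℕ) = (if a < j then 1 else 0) + (if j = a then 1 else 0) := by
    intro j
    by_cases h : j = a
    · subst h; simp
    · simp [h]
  have hB : ∀ i j : Fin n, (if i < j ∧ (if j = a then 0 else (Fin.rev j).succ) <
      (if i = a then 0 else (Fin.rev i).succ) then 1 else 0 : ℕ) =
      if i = a then 0 else if i < j then 1 else 0 := by
    intro i j
    by_cases h : i = a
    · simp [h]
    · by_cases h' : j = a
      · simp [h, h']
      · simp [h, h']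
  simp only [hA, hB]
  have hC : (∑ i : Fin n, ∑ j : Fin n, if i < j then 1 else 0) =
     (∑ j : Fin n, if a < j then 1 else 0) +
      ∑ i : Fin n, ∑ j : Fin n, if i = a then 0 else if i < j then 1 else 0 := by
    have : ∀ i : Fin n, (∑ j : Fin n, if i < j then 1 else 0) =
      (if i = a then (∑ j : Fin n, if a < j then 1 else 0) else 0) +
        ∑ j : Fin n, if i = a then 0 else if i < j then 1 else 0 := by
      intro i
      by_cases h : i = a <;> simp [h]
    rw [Finset.sum_congr rfl (fun i _ => this i), Finset.sum_add_distrib]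
    simp
  rw [hC, Finset.sum_add_distrib]
  simp
  ring

theorem sum_adj (n : ℕ) :
    (∑ a : Fin (n+1), ∑ b : Fin (n+1), if a.val + 1 = b.val then 1 else 0) = n := by
  rw [Fin.sum_univ_castSucc]
  have h1 : ∀ a : Fin n, (∑ b : Fin (n+1), if a.castSucc.val + 1 = b.val then 1 else 0) = 1 := by
    intro a
    have : ∀ b : Fin (n+1), (a.castSucc.val + 1 = b.val) ↔ a.succ = b := by
      intro b; simp [Fin.ext_iff]
    simp only [this]; simp
  have h2 : (∑ b : Fin (n+1), if (Fin.last n).val + 1 = b.val then 1 else 0) = 0 := by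
    apply Finset.sum_eq_zero
    intro b _
    rw [if_neg]; have := b.2; simp; omega
  rw [Finset.sum_congr rfl (fun a _ => h1 a), h2]; simp

theorem S_succ (n : ℕ) : S (n+1) = (n+1) * S n + n * (n.choose 2 + 1) := by
  have h1 : S (n+1) = ∑ x : Fin (n+1) × Equiv.Perm (Fin n), ∑ y : Fin (n+1) × Equiv.Perm (Fin n),
      if (lexLT (kxt x.1 x.2) (kxt y.1 y.2) ∧
      ∀ ρ : Equiv.Perm (Fin (n+1)), lexLT (kxt x.1 x.2) ρ → ¬ lexLT ρ (kxt y.1 y.2))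
      then kendall (kxt x.1 x.2) (kxt y.1 y.2) else 0 := by
    rw [S, ← (kxt_bij n).sum_comp]
    refine Finset.sum_congr rfl fun x _ => ?_
    rw [← (kxt_bij n).sum_comp]
  have h2 : ∀ x y : Fin (n+1) × Equiv.Perm (Fin n),
      (if (lexLT (kxt x.1 x.2) (kxt y.1 y.2) ∧
      ∀ ρ : Equiv.Perm (Fin (n+1)), lexLT (kxt x.1 x.2) ρ → ¬ lexLT ρ (kxt y.1 y.2))
      then kendall (kxt x.1 x.2) (kxt y.1 y.2) else 0) =
      (if x.1 = y.1 then (if (lexLT x.2 y.2 ∧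
        ∀ ρ : Equiv.Perm (Fin n), lexLT x.2 ρ → ¬ lexLT ρ y.2) then kendall x.2 y.2 else 0) else 0)
      + (if x.2 = Fin.revPerm then if y.2 = 1 then 
        (if x.1.val + 1 = y.1.val then 1 else 0) * (n.choose 2 + 1) else 0 else 0) := by
    rintro ⟨a, σ⟩ ⟨b, τ⟩
    simp only [cov_kxt]
    by_cases hab : a = b
    · subst hab
      simp [kendall_kxt_same]
    · by_cases h : a.val + 1 = b.val ∧ σ = Fin.revPerm ∧ τ = 1
      · obtain ⟨h, rfl, rfl⟩ := h
        have hb := b.2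
        obtain ⟨a', rfl⟩ : ∃ a' : Fin n, a = a'.castSucc := ⟨⟨a.val, by omega⟩, rfl⟩
        obtain rfl : b = a'.succ := by ext; simpa using h.symm
        simp [kendall_kxt_step, hab]
      · simp only [hab, h, false_and, or_self, if_false]
        by_cases h3 : σ = Fin.revPerm <;> by_cases h4 : τ = 1 <;> simp_all
  rw [h1]
  simp only [h2, Finset.sum_add_distrib]
  congr 1
  · rw [Fintype.sum_prod_type]
    simp only [Fintype.sum_prod_type_right, Finset.sum_ite_eq, Finset.mem_univ, if_true]
    rw [Finset.sum_const]
    simp [S]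
  · simp only [Fintype.sum_prod_type]
    simp only [Finset.sum_ite_irrel, Finset.sum_const_zero, Finset.sum_ite_eq', Finset.mem_univ,
      if_true]
    simp only [← Finset.sum_mul, sum_adj]

theorem S_closed (n : ℕ) : S n + n.choose 2 + 2 = 2 * n.factorial := by
  induction n with
  | zero => 
    have : S 0 = 0 := by
      simp only [S]
      refine Finset.sum_eq_zero fun σ _ => Finset.sum_eq_zero fun τ _ => ?_
      rw [if_neg]
      rintro ⟨⟨p, _⟩, _⟩
      exact p.elim0
    simp [this]
  | succ n ih =>
    have hc : (n+1).choose 2 = n + n.choose 2 := by simp [Nat.choose_succ_succ]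
    have h2 : n.choose 2 * 2 + n = n * n := by
      have := Nat.triangle_succ n
      rw [← sum_pairs]
      clear * -
      rw [sum_pairs, Nat.choose_two_right, Nat.div_mul_cancel (Nat.even_mul_pred_self n).two_dvd]
      cases n with
      | zero => rfl
      | succ k => simp; ring
    rw [S_succ, hc, Nat.factorial_succ]
    have : 2 * ((n+1) * n.factorial) = (n+1) * (2 * n.factorial) := by ring
    rw [this, ← ih]
    nlinarith

/-- `S n / (n! - 1)` converges to `2` as `n → ∞`. -/
theorem tendsto_average_kendall_lex :
    Filter.Tendsto (fun n : ℕ => (S n : ℝ) / ((n.factorial : ℝ) - 1))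
      Filter.atTop (nhds 2) := by
  have hlim : Filter.Tendsto (fun n : ℕ => (n.choose 2 : ℝ) / ((n.factorial : ℝ) - 1))
      Filter.atTop (nhds 0) := by
    have h := (FloorSemiring.tendsto_pow_div_factorial_atTop (2:ℝ)).const_mul 2
    rw [mul_zero] at h
    refine tendsto_of_tendsto_of_tendsto_of_le_of_le' tendsto_const_nhds h ?_ ?_
    · filter_upwards with n
      have : (1:ℝ) ≤ n.factorial := by exact_mod_cast n.factorial_pos
      exact div_nonneg (by positivity) (by linarith)
    · filter_upwards [Filter.eventually_ge_atTop 2] with n hn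
      have h2 : (2:ℝ) ≤ n.factorial := by exact_mod_cast hn.trans n.self_le_factorial
      have h3 : (n.choose 2 : ℝ) ≤ 2 ^ n := by exact_mod_cast Nat.choose_le_two_pow n 2
      rw [← mul_div_assoc, div_le_div_iff₀ (by linarith) (by linarith)]
      have h4 : (0:ℝ) ≤ 2 ^ n := by positivity
      nlinarith
  have h := hlim.const_sub 2
  rw [sub_zero] at h
  refine h.congr' ?_
  filter_upwards [Filter.eventually_ge_atTop 2] with n hn
  have h2 : (2:ℝ) ≤ n.factorial := by exact_mod_cast hn.trans n.self_le_factorial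
  have h3 : (S n : ℝ) + n.choose 2 + 2 = 2 * n.factorial := by exact_mod_cast S_closed n
  have h4 : (n.factorial : ℝ) - 1 ≠ 0 := by linarith
  rw [eq_div_iff h4, sub_mul, div_mul_cancel₀ _ h4]
  linarith
end
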